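/- arXiv:0705.2871 — 2 statements merged into one kernel-verified Lean document; each statement's English description precedes it below -/
import Mathlib

section
/- Let b₀ > 0 and δ ∈ [0,1], set b(r) = b₀ r^{−δ}, and let a be an antiderivative of b (a(r) = b₀ r^{1−δ}/(1−δ) for δ < 1, a(r) = b₀ ln r for δ = 1). Let p, λ ∈ ℝ and let ψ : (0,∞) → ℝ be a twice continuously differentiable solution of −r⁻¹(r ψ'(r))' + (a(r)+p)² ψ(r) = λ ψ(r) with ∫₀^∞ ψ(r)² r dr = 1, such that ψ(r) has a finite limit ψ(0) as r → 0, ψ'(r) = O(r^{1−ε}) as r → 0 for every ε > 0, and e^{Nr} ψ(r) → 0, e^{Nr} ψ'(r) → 0 as r → ∞ for every N > 0. Then 2 ∫₀^∞ (a(r)+p) ψ(r)² r dr = 2 b₀⁻¹ δ ∫₀^∞ r^δ ψ'(r)² dr − (1/2) b₀⁻¹ (1−δ)²(1+δ) ∫₀^∞ r^{δ−2} ( ψ(r)² − ψ(0)² ) dr. In particular, if δ = 1 then 2 ∫₀^∞ (a(r)+p) ψ(r)² r dr > 0. -/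
open MeasureTheory Set Filter Asymptotics

noncomputable section

/-!
With `W = (a + p)² - λ` the eigenvalue equation reads `ψ'' + ψ' / r = W ψ`. Since
`W' = 2 b₀ r ^ (-δ) (a + p)`, the integrand `2 (a + p) ψ² r` equals `b₀⁻¹ r ^ (1 + δ) W' ψ²`.
Differentiating the weighted energy `r ^ (1 + δ) (W ψ² - ψ'²)` along a solution produces
`r ^ (1 + δ) W' ψ²` plus multiples of `r ^ δ W ψ²` and `r ^ δ ψ'²`. Writing `W ψ` as `ψ'' + ψ' / r`
and integrating by parts twice replaces `r ^ δ W ψ²` by multiples of `r ^ δ ψ'²` and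
`r ^ (δ - 2) ψ²`; subtracting `ψ(0)²` from `ψ²` in the last term makes the boundary value at `0`
vanish. For `δ = 1` only `∫ r ψ'²` survives, which is positive because a nonzero function that tends
to zero at infinity is not constant.
-/

open Topology

section RealAnalysis

variable {f g : ℝ → ℝ} {s x : ℝ}

theorem continuousOn_rpow_const_Ioi (x : ℝ) : ContinuousOn (fun r : ℝ => r ^ x) (Ioi 0) :=
  continuousOn_id.rpow_const fun _ hr => Or.inl (ne_of_gt hr)

theorem tendsto_rpow_nhdsGT_zero (hx : 0 < x) : Tendsto (fun r : ℝ => r ^ x) (𝓝[>] 0) (𝓝 0) := by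
  simpa [Real.zero_rpow hx.ne'] using
    (Real.continuousAt_rpow_const 0 x (Or.inr hx.le)).tendsto.mono_left nhdsWithin_le_nhds

theorem isBigO_rpow_mul_nhdsGT_zero (hf : f =O[𝓝[>] 0] fun r : ℝ => r ^ s) (x : ℝ) :
    (fun r => r ^ x * f r) =O[𝓝[>] 0] fun r : ℝ => r ^ (x + s) := by
  refine ((isBigO_refl (fun r : ℝ => r ^ x) _).mul hf).congr' .rfl ?_
  filter_upwards [self_mem_nhdsWithin] with r hr using (Real.rpow_add hr x s).symm

theorem isBigO_sq_rpow_nhdsGT_zero (hf : f =O[𝓝[>] 0] fun r : ℝ => r ^ s) :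
    (fun r => f r ^ 2) =O[𝓝[>] 0] fun r : ℝ => r ^ (2 * s) := by
  refine (hf.pow 2).congr' .rfl ?_
  filter_upwards [self_mem_nhdsWithin] with r hr
  simpa [mul_comm] using (Real.rpow_mul_natCast (le_of_lt hr) s 2).symm

theorem tendsto_rpow_mul_nhdsGT_zero (hf : f =O[𝓝[>] 0] fun r : ℝ => r ^ s) (hx : 0 < x + s) :
    Tendsto (fun r => r ^ x * f r) (𝓝[>] 0) (𝓝 0) :=
  (isBigO_rpow_mul_nhdsGT_zero hf x).trans_tendsto (tendsto_rpow_nhdsGT_zero hx)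

-- Cauchy's mean value theorem compares `f` with the primitive of the power `r ^ s`.
theorem isBigO_sub_rpow_of_deriv_isBigO_rpow {l : ℝ} (hs : -1 < s)
    (hf : DifferentiableOn ℝ f (Ioi 0)) (hf_zero : Tendsto f (𝓝[>] 0) (𝓝 l))
    (hf' : deriv f =O[𝓝[>] 0] fun r : ℝ => r ^ s) :
    (fun r => f r - l) =O[𝓝[>] 0] fun r : ℝ => r ^ (s + 1) := by
  have hs' : 0 < s + 1 := by linarith
  obtain ⟨C, hC⟩ := hf'.bound
  obtain ⟨η, hη, hbound⟩ := mem_nhdsGT_iff_exists_Ioo_subset.1 hC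
  refine IsBigO.of_bound (C / (s + 1)) ?_
  filter_upwards [Ioo_mem_nhdsGT hη] with r hr
  have hpow : DifferentiableOn ℝ (fun t : ℝ => t ^ (s + 1)) (Ioi 0) := fun t ht =>
    (Real.differentiableAt_rpow_const_of_ne _ (ne_of_gt ht)).differentiableWithinAt
  obtain ⟨c, hc, hslope⟩ := exists_ratio_deriv_eq_ratio_slope' f hr.1 (fun t : ℝ => t ^ (s + 1))
    (hf.mono Ioo_subset_Ioi_self) (hpow.mono Ioo_subset_Ioi_self)
    hf_zero (tendsto_rpow_nhdsGT_zero hs')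
    ((hf.continuousOn.continuousAt (Ioi_mem_nhds hr.1)).mono_left nhdsWithin_le_nhds)
    ((hpow.continuousOn.continuousAt (Ioi_mem_nhds hr.1)).mono_left nhdsWithin_le_nhds)
  have hcs : 0 < c ^ s := Real.rpow_pos_of_pos hc.1 s
  have hrs : 0 < r ^ (s + 1) := Real.rpow_pos_of_pos hr.1 _
  have hderiv : ‖deriv f c‖ ≤ C * c ^ s := by
    simpa [abs_of_pos hcs] using hbound ⟨hc.1, hc.2.trans hr.2⟩
  rw [Real.deriv_rpow_const, add_sub_cancel_right, sub_zero] at hslope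
  have hnorm : r ^ (s + 1) * ‖deriv f c‖ = ‖f r - l‖ * ((s + 1) * c ^ s) := by
    simpa [abs_of_pos hcs, abs_of_pos hrs, abs_of_pos hs'] using congrArg norm hslope
  rw [Real.norm_of_nonneg hrs.le, div_mul_eq_mul_div, le_div_iff₀ hs']
  refine le_of_mul_le_mul_right ?_ hcs
  calc ‖f r - l‖ * (s + 1) * c ^ s = r ^ (s + 1) * ‖deriv f c‖ := by rw [hnorm, mul_assoc]
    _ ≤ r ^ (s + 1) * (C * c ^ s) := by gcongr
    _ = C * r ^ (s + 1) * c ^ s := by ring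

theorem isBigO_sq_sub_sq_rpow_of_deriv_isBigO_rpow {l : ℝ}
    (hf : DifferentiableOn ℝ f (Ioi 0)) (hs : -1 < s)
    (hf_zero : Tendsto f (𝓝[>] 0) (𝓝 l)) (hf' : deriv f =O[𝓝[>] 0] fun r : ℝ => r ^ s) :
    (fun r => f r ^ 2 - l ^ 2) =O[𝓝[>] 0] fun r : ℝ => r ^ (s + 1) :=
  ((isBigO_sub_rpow_of_deriv_isBigO_rpow hs hf hf_zero hf').mul
    ((hf_zero.add_const l).isBigO_one ℝ)).congr (fun _ => by ring) (fun _ => mul_one _)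

theorem isBigO_rpow_rpow_atTop_of_le {y : ℝ} (hxy : x ≤ y) :
    (fun r : ℝ => r ^ x) =O[atTop] fun r : ℝ => r ^ y := by
  refine IsBigO.of_bound' ?_
  filter_upwards [eventually_ge_atTop 1] with r hr
  rw [Real.norm_of_nonneg (by positivity), Real.norm_of_nonneg (by positivity)]
  exact Real.rpow_le_rpow_of_exponent_le hr hxy

theorem isBigO_const_rpow_atTop (c : ℝ) (hx : 0 ≤ x) :
    (fun _ => c) =O[atTop] fun r : ℝ => r ^ x :=
  (isBigO_const_const c one_ne_zero atTop).trans
    (by simpa using isBigO_rpow_rpow_atTop_of_le hx)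

theorem superpolynomialDecay_of_tendsto_exp_mul {c : ℝ} (hc : 0 < c)
    (hf : Tendsto (fun r => Real.exp (c * r) * f r) atTop (𝓝 0)) :
    SuperpolynomialDecay atTop id f := by
  intro n
  have hmul := (tendsto_rpow_mul_exp_neg_mul_atTop_nhds_zero n c hc).mul hf
  rw [mul_zero] at hmul
  refine hmul.congr fun r => ?_
  rw [Real.rpow_natCast, mul_assoc, ← mul_assoc (Real.exp _), ← Real.exp_add]
  simp

theorem superpolynomialDecay_sq (hf : SuperpolynomialDecay atTop id f) :
    SuperpolynomialDecay atTop id fun r => f r ^ 2 :=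
  (hf.mul hf).congr fun _ => (sq _).symm

theorem superpolynomialDecay_isBigO_rpow_mul (hg : g =O[atTop] fun r : ℝ => r ^ x)
    (hf : SuperpolynomialDecay atTop id f) :
    SuperpolynomialDecay atTop id fun r => g r * f r := by
  rw [superpolynomialDecay_iff_isBigO _ tendsto_id] at hf ⊢
  intro z
  have hceil : g =O[atTop] fun r : ℝ => r ^ (⌈x⌉ : ℝ) :=
    hg.trans (isBigO_rpow_rpow_atTop_of_le (Int.le_ceil x))
  refine (hceil.mul (hf (z - ⌈x⌉))).congr' .rfl ?_
  filter_upwards [eventually_gt_atTop 0] with r hr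
  rw [id, Real.rpow_intCast, ← zpow_add₀ hr.ne', add_sub_cancel]

theorem isBigO_rpow_of_superpolynomialDecay (hf : SuperpolynomialDecay atTop id f) (z : ℤ) :
    f =O[atTop] fun r : ℝ => r ^ (z : ℝ) := by
  simpa using (superpolynomialDecay_iff_isBigO _ tendsto_id).1 hf z

theorem integrableOn_Ioi_of_isBigO_rpow {y : ℝ} (hf : ContinuousOn f (Ioi 0))
    (hx : x < -1) (hf_top : f =O[atTop] fun r : ℝ => r ^ x)
    (hy : -1 < y) (hf_zero : f =O[𝓝[>] 0] fun r : ℝ => r ^ y) : IntegrableOn f (Ioi 0) := by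
  simpa using mellin_convergent_of_isBigO_scalar (s := 1) (a := -x) (b := -y)
    (hf.locallyIntegrableOn measurableSet_Ioi) (by simpa using hf_top) (by linarith)
    (by simpa using hf_zero) (by linarith)

theorem integrableOn_rpow_mul_sq (hf : ContinuousOn f (Ioi 0)) (hxs : -1 < x + 2 * s)
    (hf_zero : f =O[𝓝[>] 0] fun r : ℝ => r ^ s) (hf_top : SuperpolynomialDecay atTop id f) :
    IntegrableOn (fun r => r ^ x * f r ^ 2) (Ioi 0) :=
  integrableOn_Ioi_of_isBigO_rpow ((continuousOn_rpow_const_Ioi x).mul (hf.pow 2))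
    (by norm_num) (isBigO_rpow_of_superpolynomialDecay (superpolynomialDecay_isBigO_rpow_mul
      (isBigO_refl _ _) (superpolynomialDecay_sq hf_top)) (-2))
    hxs (isBigO_rpow_mul_nhdsGT_zero (isBigO_sq_rpow_nhdsGT_zero hf_zero) x)

theorem integrableOn_rpow_mul_sq_sub_sq {l m : ℝ} (hf : DifferentiableOn ℝ f (Ioi 0))
    (hx : x < -1) (hxs : -1 < x + (s + 1)) (hf_zero : Tendsto f (𝓝[>] 0) (𝓝 l))
    (hf' : deriv f =O[𝓝[>] 0] fun r : ℝ => r ^ s) (hf_top : Tendsto f atTop (𝓝 m)) :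
    IntegrableOn (fun r => r ^ x * (f r ^ 2 - l ^ 2)) (Ioi 0) := by
  have htop : (fun r => r ^ x * (f r ^ 2 - l ^ 2)) =O[atTop] fun r : ℝ => r ^ x := by
    simpa using (isBigO_refl (fun r : ℝ => r ^ x) atTop).mul
      (((hf_top.pow 2).sub_const (l ^ 2)).isBigO_one ℝ)
  have hsub := isBigO_sq_sub_sq_rpow_of_deriv_isBigO_rpow hf (by linarith) hf_zero hf'
  exact integrableOn_Ioi_of_isBigO_rpow
    ((continuousOn_rpow_const_Ioi x).mul ((hf.continuousOn.pow 2).sub continuousOn_const))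
    hx htop hxs (isBigO_rpow_mul_nhdsGT_zero hsub x)

theorem integral_Ioi_of_hasDerivAt_of_tendsto_nhdsGT {f' : ℝ → ℝ} {a l m : ℝ}
    (hf : ∀ r ∈ Ioi a, HasDerivAt f (f' r) r) (hf' : IntegrableOn f' (Ioi a))
    (hl : Tendsto f (𝓝[>] a) (𝓝 l)) (hm : Tendsto f atTop (𝓝 m)) :
    ∫ r in Ioi a, f' r = m - l := by
  simpa [Pi.mul_def] using integral_Ioi_deriv_mul_eq_sub hf (v := 1) (v' := 0)
    (fun r _ => hasDerivAt_const r 1) (by simpa using hf') (by simpa using hl) (by simpa using hm)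

theorem setIntegral_pos_of_continuousOn {X : Type*} [TopologicalSpace X] [MeasurableSpace X]
    [OpensMeasurableSpace X] {μ : Measure X} [μ.IsOpenPosMeasure] {U : Set X} {f : X → ℝ}
    (hU : IsOpen U) (hf : ContinuousOn f U) (hfi : IntegrableOn f U μ)
    (hf_nonneg : ∀ x ∈ U, 0 ≤ f x) (hf_ne : ∃ x ∈ U, f x ≠ 0) : 0 < ∫ x in U, f x ∂μ := by
  have hf_ae : 0 ≤ᵐ[μ.restrict U] f := ae_restrict_of_forall_mem hU.measurableSet hf_nonneg
  rw [setIntegral_pos_iff_support_of_nonneg_ae hf_ae hfi, inter_comm]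
  exact (hf.isOpen_inter_preimage hU isOpen_ne).measure_pos μ hf_ne

theorem exists_deriv_ne_zero_of_tendsto_zero (hf : DifferentiableOn ℝ f (Ioi 0))
    (hf_top : Tendsto f atTop (𝓝 0)) (hf_ne : ∃ r > 0, f r ≠ 0) : ∃ r > 0, deriv f r ≠ 0 := by
  by_contra! hderiv
  obtain ⟨c, hc⟩ := isOpen_Ioi.exists_is_const_of_deriv_eq_zero isPreconnected_Ioi hf hderiv
  have hc_zero : c = 0 := by
    refine tendsto_nhds_unique (tendsto_const_nhds.congr' ?_) hf_top
    filter_upwards [eventually_gt_atTop 0] with r hr using (hc r hr).symm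
  obtain ⟨r, hr, hfr⟩ := hf_ne
  exact hfr ((hc r hr).trans hc_zero)

theorem integral_rpow_mul_deriv_sq_pos (hf : DifferentiableOn ℝ f (Ioi 0))
    (hf' : ContinuousOn (deriv f) (Ioi 0)) (hf_top : Tendsto f atTop (𝓝 0))
    (hf_ne : ∃ r > 0, f r ≠ 0) (hint : IntegrableOn (fun r => r ^ x * deriv f r ^ 2) (Ioi 0)) :
    0 < ∫ r in Ioi 0, r ^ x * deriv f r ^ 2 := by
  obtain ⟨r, hr, hf'r⟩ := exists_deriv_ne_zero_of_tendsto_zero hf hf_top hf_ne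
  refine setIntegral_pos_of_continuousOn isOpen_Ioi
    ((continuousOn_rpow_const_Ioi x).mul (hf'.pow 2)) hint
    (fun t ht => mul_nonneg (Real.rpow_nonneg (le_of_lt ht) x) (sq_nonneg _)) ⟨r, hr, ?_⟩
  exact mul_ne_zero (Real.rpow_pos_of_pos hr x).ne' (pow_ne_zero 2 hf'r)

end RealAnalysis

/-- `ψ` solves the radial Schrödinger equation `ψ'' + ψ' / r = W ψ` on `(0, ∞)`. The spectral
parameter is absorbed into `W`: for the operator `-r⁻¹ (d/dr) (r d/dr) + V` with eigenvalue `λ`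
one takes `W = V - λ`. -/
structure IsRadialSolution (W ψ : ℝ → ℝ) : Prop where
  differentiableAt : ∀ r > 0, DifferentiableAt ℝ ψ r
  hasDerivAt_deriv : ∀ r > 0, HasDerivAt (deriv ψ) (W r * ψ r - deriv ψ r / r) r

/-- The quantity whose boundary values vanish in the virial identity with weight `r ^ (1 + δ)`.
The last term, with `c = ψ(0)`, is the correction that makes it vanish at `0`. -/
def virialFlux (W ψ : ℝ → ℝ) (δ c r : ℝ) : ℝ :=
  r ^ (1 + δ) * (W r * ψ r ^ 2 - deriv ψ r ^ 2) - (1 + δ) * (r ^ δ * deriv ψ r * ψ r)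
    - (1 + δ) * (1 - δ) / 2 * (r ^ (δ - 1) * (ψ r ^ 2 - c ^ 2))

/-- The derivative of `virialFlux W ψ δ c` for a solution `ψ`, with `W'` the derivative of `W`. -/
def virialDensity (W' ψ : ℝ → ℝ) (δ c r : ℝ) : ℝ :=
  r ^ (1 + δ) * W' r * ψ r ^ 2 - 2 * δ * (r ^ δ * deriv ψ r ^ 2)
    + 1 / 2 * (1 - δ) ^ 2 * (1 + δ) * (r ^ (δ - 2) * (ψ r ^ 2 - c ^ 2))

section Virial

variable {W W' ψ : ℝ → ℝ} {δ s ψ₀ : ℝ}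

namespace IsRadialSolution

theorem of_contDiffOn {V : ℝ → ℝ} {lam : ℝ} (hψ : ContDiffOn ℝ 2 ψ (Ioi 0))
    (heq : ∀ r > 0, -r⁻¹ * deriv (fun t => t * deriv ψ t) r + V r * ψ r = lam * ψ r) :
    IsRadialSolution (fun r => V r - lam) ψ where
  differentiableAt r hr := hψ.differentiableOn two_ne_zero |>.differentiableAt (Ioi_mem_nhds hr)
  hasDerivAt_deriv r hr := by
    have hderiv : HasDerivAt (deriv ψ) (deriv (deriv ψ) r) r :=
      ((hψ.deriv_of_isOpen isOpen_Ioi (m := 1) (by norm_num)).differentiableOn one_ne_zero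
        |>.differentiableAt (Ioi_mem_nhds hr)).hasDerivAt
    have hmul : deriv (fun t => t * deriv ψ t) r = 1 * deriv ψ r + r * deriv (deriv ψ) r :=
      ((hasDerivAt_id' r).mul hderiv).deriv
    refine hderiv.congr_deriv ?_
    have heqr := heq r hr
    rw [hmul] at heqr
    have hr0 : r ≠ 0 := ne_of_gt hr
    field_simp at heqr ⊢
    linarith

theorem differentiableOn (hψ : IsRadialSolution W ψ) : DifferentiableOn ℝ ψ (Ioi 0) :=
  fun r hr => (hψ.differentiableAt r hr).differentiableWithinAt

theorem continuousOn_deriv (hψ : IsRadialSolution W ψ) : ContinuousOn (deriv ψ) (Ioi 0) :=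
  fun r hr => (hψ.hasDerivAt_deriv r hr).continuousAt.continuousWithinAt

theorem hasDerivAt_virialFlux (hψ : IsRadialSolution W ψ) {r : ℝ} (hr : 0 < r)
    (hW : HasDerivAt W (W' r) r) (δ c : ℝ) :
    HasDerivAt (virialFlux W ψ δ c) (virialDensity W' ψ δ c r) r := by
  have hpow (x : ℝ) : HasDerivAt (fun t : ℝ => t ^ x) (x * r ^ (x - 1)) r :=
    Real.hasDerivAt_rpow_const (Or.inl hr.ne')
  have hψr := (hψ.differentiableAt r hr).hasDerivAt
  have hψ'r := hψ.hasDerivAt_deriv r hr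
  refine ((((hpow (1 + δ)).mul ((hW.mul (hψr.pow 2)).sub (hψ'r.pow 2))).sub
    ((((hpow δ).mul hψ'r).mul hψr).const_mul (1 + δ))).sub
    (((hpow (δ - 1)).mul ((hψr.pow 2).sub_const (c ^ 2))).const_mul
      ((1 + δ) * (1 - δ) / 2))).congr_deriv ?_
  simp only [virialDensity, Pi.mul_apply, Pi.pow_apply, Pi.sub_apply, add_sub_cancel_left,
    show δ - 1 - 1 = δ - 2 by ring, Real.rpow_add hr, Real.rpow_sub hr, Real.rpow_one,
    Real.rpow_two]
  push_cast
  field_simp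
  ring

end IsRadialSolution

theorem tendsto_virialFlux_nhdsGT_zero (hψ : DifferentiableOn ℝ ψ (Ioi 0)) (hδ : δ ≤ 1)
    (hs : -δ < s) (hW_zero : Tendsto (fun r => r ^ (1 + δ) * W r) (𝓝[>] 0) (𝓝 0))
    (hψ_zero : Tendsto ψ (𝓝[>] 0) (𝓝 ψ₀)) (hψ'_zero : deriv ψ =O[𝓝[>] 0] fun r : ℝ => r ^ s) :
    Tendsto (virialFlux W ψ δ ψ₀) (𝓝[>] 0) (𝓝 0) := by
  have hpotential : Tendsto (fun r => r ^ (1 + δ) * W r * ψ r ^ 2) (𝓝[>] 0) (𝓝 0) := by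
    simpa using hW_zero.mul (hψ_zero.pow 2)
  have hkinetic : Tendsto (fun r => r ^ (1 + δ) * deriv ψ r ^ 2) (𝓝[>] 0) (𝓝 0) :=
    tendsto_rpow_mul_nhdsGT_zero (isBigO_sq_rpow_nhdsGT_zero hψ'_zero) (by linarith)
  have hmixed : Tendsto (fun r => r ^ δ * deriv ψ r * ψ r) (𝓝[>] 0) (𝓝 0) := by
    simpa using (tendsto_rpow_mul_nhdsGT_zero hψ'_zero (x := δ) (by linarith)).mul hψ_zero
  have hcorrection : Tendsto (fun r => r ^ (δ - 1) * (ψ r ^ 2 - ψ₀ ^ 2)) (𝓝[>] 0) (𝓝 0) :=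
    tendsto_rpow_mul_nhdsGT_zero (isBigO_sq_sub_sq_rpow_of_deriv_isBigO_rpow hψ (by linarith)
      hψ_zero hψ'_zero) (by linarith)
  have hflux := ((hpotential.sub hkinetic).sub (hmixed.const_mul (1 + δ))).sub
    (hcorrection.const_mul ((1 + δ) * (1 - δ) / 2))
  simp only [mul_zero, sub_zero] at hflux
  exact hflux.congr fun r => by rw [virialFlux]; ring

theorem tendsto_virialFlux_atTop {x : ℝ} (hδ : δ ≤ 1) (hW_top : W =O[atTop] fun r : ℝ => r ^ x)
    (hψ_top : SuperpolynomialDecay atTop id ψ)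
    (hψ'_top : SuperpolynomialDecay atTop id (deriv ψ)) (c : ℝ) :
    Tendsto (virialFlux W ψ δ c) atTop (𝓝 0) := by
  have hψ_lim : Tendsto ψ atTop (𝓝 0) := by simpa using hψ_top 0
  have henergy : SuperpolynomialDecay atTop id fun r => W r * ψ r ^ 2 + -1 * deriv ψ r ^ 2 :=
    (superpolynomialDecay_isBigO_rpow_mul hW_top (superpolynomialDecay_sq hψ_top)).add
      ((superpolynomialDecay_sq hψ'_top).const_mul (-1))
  have hmain : Tendsto (fun r => r ^ (1 + δ) * (W r * ψ r ^ 2 + -1 * deriv ψ r ^ 2)) atTop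
      (𝓝 0) := by
    simpa using superpolynomialDecay_isBigO_rpow_mul (isBigO_refl _ _) henergy 0
  have hmixed : Tendsto (fun r => r ^ δ * (deriv ψ r * ψ r)) atTop (𝓝 0) := by
    simpa using superpolynomialDecay_isBigO_rpow_mul (isBigO_refl (fun r : ℝ => r ^ δ) atTop)
      (hψ'_top.mul hψ_top) 0
  have hcorrection : Tendsto (fun r => (1 + δ) * (1 - δ) / 2 * (r ^ (δ - 1) * (ψ r ^ 2 - c ^ 2)))
      atTop (𝓝 0) := by
    rcases hδ.lt_or_eq with hlt | rfl
    · simpa using ((tendsto_rpow_neg_atTop (sub_pos.2 hlt)).mul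
        ((hψ_lim.pow 2).sub_const (c ^ 2))).const_mul ((1 + δ) * (1 - δ) / 2)
    · simp
  have hflux := (hmain.sub (hmixed.const_mul (1 + δ))).sub hcorrection
  simp only [mul_zero, sub_zero] at hflux
  exact hflux.congr fun r => by rw [virialFlux]; ring

theorem IsRadialSolution.virial_identity (hψ : IsRadialSolution W ψ)
    (hW : ∀ r > 0, HasDerivAt W (W' r) r) (hδ : δ ≤ 1) (hs : -δ < s) {x : ℝ}
    (hW_zero : Tendsto (fun r => r ^ (1 + δ) * W r) (𝓝[>] 0) (𝓝 0))
    (hW_top : W =O[atTop] fun r : ℝ => r ^ x)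
    (hW'_int : IntegrableOn (fun r => r ^ (1 + δ) * W' r * ψ r ^ 2) (Ioi 0))
    (hψ_zero : Tendsto ψ (𝓝[>] 0) (𝓝 ψ₀)) (hψ'_zero : deriv ψ =O[𝓝[>] 0] fun r : ℝ => r ^ s)
    (hψ_top : SuperpolynomialDecay atTop id ψ)
    (hψ'_top : SuperpolynomialDecay atTop id (deriv ψ)) :
    ∫ r in Ioi 0, r ^ (1 + δ) * W' r * ψ r ^ 2 =
      2 * δ * (∫ r in Ioi 0, r ^ δ * deriv ψ r ^ 2)
        - 1 / 2 * (1 - δ) ^ 2 * (1 + δ) * ∫ r in Ioi 0, r ^ (δ - 2) * (ψ r ^ 2 - ψ₀ ^ 2) := by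
  have hkinetic : IntegrableOn (fun r => 2 * δ * (r ^ δ * deriv ψ r ^ 2)) (Ioi 0) :=
    (integrableOn_rpow_mul_sq hψ.continuousOn_deriv (by linarith) hψ'_zero hψ'_top).const_mul _
  have hdiff : IntegrableOn (fun r => r ^ (1 + δ) * W' r * ψ r ^ 2
      - 2 * δ * (r ^ δ * deriv ψ r ^ 2)) (Ioi 0) := hW'_int.sub hkinetic
  -- At `δ = 1` the integrand may fail to be integrable, but its coefficient vanishes.
  have hcorrection : IntegrableOn (fun r => 1 / 2 * (1 - δ) ^ 2 * (1 + δ) *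
      (r ^ (δ - 2) * (ψ r ^ 2 - ψ₀ ^ 2))) (Ioi 0) := by
    rcases hδ.lt_or_eq with hlt | rfl
    · exact (integrableOn_rpow_mul_sq_sub_sq hψ.differentiableOn (by linarith) (by linarith)
        hψ_zero hψ'_zero (by simpa using hψ_top 0)).const_mul _
    · simp
  have hzero : ∫ r in Ioi 0, virialDensity W' ψ δ ψ₀ r = 0 - 0 :=
    integral_Ioi_of_hasDerivAt_of_tendsto_nhdsGT
      (fun r hr => hψ.hasDerivAt_virialFlux hr (hW r hr) δ ψ₀)
      (hdiff.add hcorrection)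
      (tendsto_virialFlux_nhdsGT_zero hψ.differentiableOn hδ hs hW_zero hψ_zero hψ'_zero)
      (tendsto_virialFlux_atTop hδ hW_top hψ_top hψ'_top ψ₀)
  simp only [virialDensity] at hzero
  rw [integral_add hdiff hcorrection, integral_sub hW'_int hkinetic,
    integral_const_mul, integral_const_mul] at hzero
  linarith

end Virial

/-- `a` is the antiderivative of the field `r ↦ b₀ r ^ (-δ)` on `(0, ∞)` fixed by `a(0) = 0` for
`δ < 1` and by `a(1) = 0` for `δ = 1`. -/
def IsPowerFieldPotential (b₀ δ : ℝ) (a : ℝ → ℝ) : Prop :=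
  (δ = 1 ∧ ∀ r > (0 : ℝ), a r = b₀ * Real.log r) ∨
    (δ < 1 ∧ ∀ r > (0 : ℝ), a r = b₀ * r ^ (1 - δ) / (1 - δ))

namespace IsPowerFieldPotential

variable {b₀ δ : ℝ} {a : ℝ → ℝ}

theorem hasDerivAt (ha : IsPowerFieldPotential b₀ δ a) {r : ℝ} (hr : 0 < r) :
    HasDerivAt a (b₀ * r ^ (-δ)) r := by
  rcases ha with ⟨rfl, ha⟩ | ⟨hδ, ha⟩
  · refine HasDerivAt.congr_of_eventuallyEq ?_ ((lt_mem_nhds hr).mono ha)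
    simpa [Real.rpow_neg_one] using (Real.hasDerivAt_log hr.ne').const_mul b₀
  · refine HasDerivAt.congr_of_eventuallyEq ?_ ((lt_mem_nhds hr).mono ha)
    have hδ' : 1 - δ ≠ 0 := by linarith
    refine (((Real.hasDerivAt_rpow_const (p := 1 - δ) (Or.inl hr.ne')).const_mul b₀).div_const
      (1 - δ)).congr_deriv ?_
    rw [show 1 - δ - 1 = -δ by ring]
    field_simp

theorem isBigO_add_const_nhdsGT_zero (ha : IsPowerFieldPotential b₀ δ a) {η : ℝ} (hη : 0 < η)
    (p : ℝ) : (fun r => a r + p) =O[𝓝[>] 0] fun r : ℝ => r ^ (-η) := by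
  have hconst : (fun _ => p) =O[𝓝[>] 0] fun r : ℝ => r ^ (-η) :=
    (isLittleO_const_left.2 (Or.inr (tendsto_norm_atTop_atTop.comp
      (tendsto_rpow_neg_nhdsGT_zero (neg_lt_zero.2 hη))))).isBigO
  refine IsBigO.add ?_ hconst
  rcases ha with ⟨-, ha⟩ | ⟨hδ, ha⟩
  · exact ((isLittleO_log_rpow_nhdsGT_zero (neg_lt_zero.2 hη)).isBigO.const_mul_left b₀).congr'
      (eventually_mem_nhdsWithin.mono fun r hr => (ha r hr).symm) .rfl
  · have hpow : (fun r : ℝ => r ^ (1 - δ)) =O[𝓝[>] 0] fun r : ℝ => r ^ (-η) :=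
      (IsBigO.rpow_rpow_nhdsGE_zero_of_le (by linarith) (by linarith)).mono
        (nhdsWithin_mono 0 Ioi_subset_Ici_self)
    refine (hpow.const_mul_left (b₀ / (1 - δ))).congr' ?_ .rfl
    filter_upwards [self_mem_nhdsWithin] with r hr
    rw [ha r hr, div_mul_eq_mul_div]

theorem isBigO_add_const_atTop (ha : IsPowerFieldPotential b₀ δ a) (hδ : -1 < δ) (p : ℝ) :
    (fun r => a r + p) =O[atTop] fun r : ℝ => r ^ (2 : ℝ) := by
  refine IsBigO.add ?_ (isBigO_const_rpow_atTop p zero_le_two)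
  rcases ha with ⟨-, ha⟩ | ⟨-, ha⟩
  · exact ((isLittleO_log_rpow_atTop two_pos).isBigO.const_mul_left b₀).congr'
      ((eventually_gt_atTop 0).mono fun r hr => (ha r hr).symm) .rfl
  · have hpow : (fun r : ℝ => r ^ (1 - δ)) =O[atTop] fun r : ℝ => r ^ (2 : ℝ) :=
      isBigO_rpow_rpow_atTop_of_le (by linarith)
    refine (hpow.const_mul_left (b₀ / (1 - δ))).congr' ?_ .rfl
    filter_upwards [eventually_gt_atTop 0] with r hr
    rw [ha r hr, div_mul_eq_mul_div]

theorem hasDerivAt_add_sq_sub (ha : IsPowerFieldPotential b₀ δ a) (p lam : ℝ) {r : ℝ}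
    (hr : 0 < r) :
    HasDerivAt (fun t => (a t + p) ^ 2 - lam) (2 * b₀ * (r ^ (-δ) * (a r + p))) r := by
  refine ((((ha.hasDerivAt hr).add_const p).pow 2).sub_const lam).congr_deriv ?_
  push_cast
  ring

theorem tendsto_rpow_mul_add_sq_sub_nhdsGT_zero (ha : IsPowerFieldPotential b₀ δ a) (hδ : -1 < δ)
    (p lam : ℝ) :
    Tendsto (fun r => r ^ (1 + δ) * ((a r + p) ^ 2 - lam)) (𝓝[>] 0) (𝓝 0) := by
  have hsq := isBigO_sq_rpow_nhdsGT_zero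
    (ha.isBigO_add_const_nhdsGT_zero (η := (1 + δ) / 4) (by linarith) p)
  simpa [mul_sub] using (tendsto_rpow_mul_nhdsGT_zero hsq (x := 1 + δ) (by linarith)).sub
    ((tendsto_rpow_nhdsGT_zero (x := 1 + δ) (by linarith)).mul_const lam)

theorem isBigO_add_sq_sub_atTop (ha : IsPowerFieldPotential b₀ δ a) (hδ : -1 < δ) (p lam : ℝ) :
    (fun r => (a r + p) ^ 2 - lam) =O[atTop] fun r : ℝ => r ^ (4 : ℝ) := by
  have hsq : (fun r => (a r + p) ^ 2) =O[atTop] fun r : ℝ => r ^ (4 : ℝ) := by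
    refine ((ha.isBigO_add_const_atTop hδ p).pow 2).congr_right fun r => ?_
    norm_cast
    ring
  exact hsq.sub (isBigO_const_rpow_atTop lam zero_le_four)

theorem integrableOn_add_mul_sq_mul (ha : IsPowerFieldPotential b₀ δ a) (hδ : -1 < δ) (p : ℝ)
    {ψ : ℝ → ℝ} {ψ₀ : ℝ} (hψ : ContinuousOn ψ (Ioi 0)) (hψ_zero : Tendsto ψ (𝓝[>] 0) (𝓝 ψ₀))
    (hψ_top : SuperpolynomialDecay atTop id ψ) :
    IntegrableOn (fun r => (a r + p) * ψ r ^ 2 * r) (Ioi 0) := by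
  have ha_cont : ContinuousOn a (Ioi 0) :=
    fun r hr => (ha.hasDerivAt hr).continuousAt.continuousWithinAt
  have hzero : (fun r => (a r + p) * ψ r ^ 2 * r) =O[𝓝[>] 0] fun r : ℝ => r ^ (1 + -1 : ℝ) := by
    have hmul := (ha.isBigO_add_const_nhdsGT_zero one_pos p).mul ((hψ_zero.pow 2).isBigO_one ℝ)
    simp only [mul_one] at hmul
    exact (isBigO_rpow_mul_nhdsGT_zero hmul 1).congr_left fun r => by rw [Real.rpow_one, mul_comm]
  have hdecay : SuperpolynomialDecay atTop id fun r => (a r + p) * ψ r ^ 2 * r :=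
    (superpolynomialDecay_isBigO_rpow_mul (ha.isBigO_add_const_atTop hδ p)
      (superpolynomialDecay_sq hψ_top)).mul_param
  exact integrableOn_Ioi_of_isBigO_rpow (by fun_prop) (by norm_num)
    (isBigO_rpow_of_superpolynomialDecay hdecay (-2)) (by norm_num) hzero

end IsPowerFieldPotential

section GroupVelocity

variable {b₀ δ s p lam ψ₀ : ℝ} {a ψ : ℝ → ℝ}

theorem group_velocity_formula_m_zero_general (hb₀ : b₀ ≠ 0) (hδ : δ ∈ Ioc (-1) 1)
    (ha : IsPowerFieldPotential b₀ δ a) (hψ : IsRadialSolution (fun r => (a r + p) ^ 2 - lam) ψ)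
    (hψ_ne : ∃ r > 0, ψ r ≠ 0) (hψ_zero : Tendsto ψ (𝓝[>] 0) (𝓝 ψ₀)) (hs : -δ < s)
    (hψ'_zero : deriv ψ =O[𝓝[>] 0] fun r : ℝ => r ^ s)
    (hψ_top : SuperpolynomialDecay atTop id ψ)
    (hψ'_top : SuperpolynomialDecay atTop id (deriv ψ)) :
    (2 * (∫ r in Ioi 0, (a r + p) * ψ r ^ 2 * r) =
        2 * b₀⁻¹ * δ * (∫ r in Ioi 0, r ^ δ * deriv ψ r ^ 2)
        - (1 / 2) * b₀⁻¹ * (1 - δ) ^ 2 * (1 + δ) *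
            ∫ r in Ioi 0, r ^ (δ - 2) * (ψ r ^ 2 - ψ₀ ^ 2)) ∧
    (δ = 1 → 0 < b₀ * (2 * ∫ r in Ioi 0, (a r + p) * ψ r ^ 2 * r)) := by
  have hweight : EqOn (fun r => 2 * b₀ * ((a r + p) * ψ r ^ 2 * r))
      (fun r => r ^ (1 + δ) * (2 * b₀ * (r ^ (-δ) * (a r + p))) * ψ r ^ 2) (Ioi 0) := by
    intro r hr
    have hr' : r ^ (1 + δ) * r ^ (-δ) = r := by
      rw [← Real.rpow_add hr, add_neg_cancel_right, Real.rpow_one]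
    linear_combination -(2 * b₀ * (a r + p) * ψ r ^ 2) * hr'
  have hint : IntegrableOn (fun r => 2 * b₀ * ((a r + p) * ψ r ^ 2 * r)) (Ioi 0) :=
    (ha.integrableOn_add_mul_sq_mul hδ.1 p hψ.differentiableOn.continuousOn hψ_zero
      hψ_top).const_mul (2 * b₀)
  have hvirial := hψ.virial_identity (fun r hr => ha.hasDerivAt_add_sq_sub p lam hr) hδ.2 hs
    (ha.tendsto_rpow_mul_add_sq_sub_nhdsGT_zero hδ.1 p lam) (ha.isBigO_add_sq_sub_atTop hδ.1 p lam)
    (hint.congr_fun hweight measurableSet_Ioi) hψ_zero hψ'_zero hψ_top hψ'_top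
  rw [← setIntegral_congr_fun measurableSet_Ioi hweight, integral_const_mul] at hvirial
  refine ⟨?_, ?_⟩
  · field_simp
    linarith
  · rintro rfl
    have hpos := integral_rpow_mul_deriv_sq_pos hψ.differentiableOn hψ.continuousOn_deriv
      (by simpa using hψ_top 0) hψ_ne (x := 1)
      (integrableOn_rpow_mul_sq hψ.continuousOn_deriv (by linarith) hψ'_zero hψ'_top)
    linarith

end GroupVelocity

/-- Proposition 4.5 of the paper: for the field `b(r) = b₀ r^{-δ}` with `b₀ > 0`,
`δ ∈ [0,1]`, and its antiderivative `a` (`a(r) = b₀ r^{1-δ}/(1-δ)` for `δ < 1`,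
`a(r) = b₀ ln r` for `δ = 1`), a normalized eigenfunction `ψ` of the fiber operator `H_0(p)`
with the stated behaviour at `0` and at `∞` satisfies the group-velocity formula
`2∫₀^∞ (a+p) ψ² r dr
  = 2 b₀⁻¹ δ ∫ r^δ (ψ′)² dr - (1/2) b₀⁻¹ (1-δ)²(1+δ) ∫ r^{δ-2} (ψ² - ψ(0)²) dr`;
in particular the left-hand side is strictly positive when `δ = 1`. -/
theorem group_velocity_formula_m_zero
    (b₀ : ℝ) (hb₀ : 0 < b₀) (δ : ℝ) (hδ : δ ∈ Set.Icc (0:ℝ) 1)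
    (a : ℝ → ℝ)
    (ha : (δ = 1 ∧ ∀ r > (0:ℝ), a r = b₀ * Real.log r) ∨
          (δ < 1 ∧ ∀ r > (0:ℝ), a r = b₀ * r ^ (1 - δ) / (1 - δ)))
    (p lam : ℝ) (ψ : ℝ → ℝ) (ψ₀ : ℝ)
    (hψC2 : ContDiffOn ℝ 2 ψ (Set.Ioi 0))
    (hψeq : ∀ r > (0:ℝ), -r⁻¹ * deriv (fun s => s * deriv ψ s) r
        + (a r + p) ^ 2 * ψ r = lam * ψ r)
    (hψnorm : (∫ r in Set.Ioi (0:ℝ), (ψ r) ^ 2 * r) = 1)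
    (hψzero : Tendsto ψ (nhdsWithin 0 (Set.Ioi 0)) (nhds ψ₀))
    (hψ'zero : ∀ ε > (0:ℝ),
      deriv ψ =O[nhdsWithin 0 (Set.Ioi 0)] fun r : ℝ => r ^ (1 - ε))
    (hψdec : ∀ N > (0:ℝ), Tendsto (fun r => Real.exp (N * r) * ψ r) atTop (nhds 0))
    (hψ'dec : ∀ N > (0:ℝ),
      Tendsto (fun r => Real.exp (N * r) * deriv ψ r) atTop (nhds 0)) :
    (2 * (∫ r in Set.Ioi (0:ℝ), (a r + p) * (ψ r) ^ 2 * r) =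
        2 * b₀⁻¹ * δ * (∫ r in Set.Ioi (0:ℝ), r ^ δ * (deriv ψ r) ^ 2)
        - (1/2) * b₀⁻¹ * (1 - δ) ^ 2 * (1 + δ) *
            ∫ r in Set.Ioi (0:ℝ), r ^ (δ - 2) * ((ψ r) ^ 2 - ψ₀ ^ 2)) ∧
    (δ = 1 → 0 < 2 * ∫ r in Set.Ioi (0:ℝ), (a r + p) * (ψ r) ^ 2 * r) := by
  obtain ⟨r, hr, hψr⟩ := exists_ne_zero_of_setIntegral_ne_zero (hψnorm.trans_ne one_ne_zero)
  obtain ⟨hformula, hpos⟩ := group_velocity_formula_m_zero_general hb₀.ne'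
    ⟨by linarith [hδ.1], hδ.2⟩ ha (.of_contDiffOn hψC2 hψeq) ⟨r, hr, by simp_all⟩ hψzero
    (by linarith [hδ.1]) (hψ'zero (1 / 2) one_half_pos)
    (superpolynomialDecay_of_tendsto_exp_mul one_pos (hψdec 1 one_pos))
    (superpolynomialDecay_of_tendsto_exp_mul one_pos (hψ'dec 1 one_pos))
  exact ⟨hformula, fun hδ_one => pos_of_mul_pos_right (hpos hδ_one) hb₀.le⟩
end
end

section
/- Let b₀ > 0 and let a : [0,∞) → ℝ satisfy ∫₀^R a(r)² r dr < ∞ for every R > 0, be bounded from above on every compact subset of [0,∞), and suppose there is r₁ > 0 such that a is differentiable on [r₁,∞) with a'(r) = b₀ for all r ≥ r₁. Then for every n ≥ 1 the function p ↦ μ_{n,0}(p) is not monotone on ℝ: there exist p₁ < p₂ with μ_{n,0}(p₁) > μ_{n,0}(p₂), and there exist p₃ < p₄ with μ_{n,0}(p₃) < μ_{n,0}(p₄). Moreover, if a(r) = b₀ r for all r ≥ 0, then the points p₁ < p₂ with μ_{n,0}(p₁) > μ_{n,0}(p₂) can be chosen with p₂ ≤ 0. -/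
open MeasureTheory Set Filter

noncomputable section

/-- A radial test function: smooth, compactly supported, with support in `(0,∞)`. -/
def IsTestR (g : ℝ → ℝ) : Prop :=
  ContDiff ℝ (⊤ : ℕ∞) g ∧ HasCompactSupport g ∧ tsupport g ⊆ Set.Ioi 0

/-- The quadratic form
`l_m[g;p] = ∫₀^∞ (|g'|² + (m² - 1/4) r⁻² |g|² + (a(r)+p)² |g|²) dr`
of the fiber operator `L_m(p)` in `L²((0,∞))`. -/
def lForm (a : ℝ → ℝ) (m : ℤ) (p : ℝ) (g : ℝ → ℝ) : ℝ :=
  ∫ r in Set.Ioi (0:ℝ),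
    ((deriv g r) ^ 2 + ((m : ℝ) ^ 2 - 1/4) * r⁻¹ ^ 2 * (g r) ^ 2
      + (a r + p) ^ 2 * (g r) ^ 2)

/-- The `n`-th min-max value `μ_{n,m}(p)`: the infimum, over `n`-dimensional subspaces `V` of
`C_c^∞((0,∞))`, of the supremum of the Rayleigh quotient `l_m[g;p]/‖g‖²` over nonzero `g ∈ V`. -/
def muRadial (a : ℝ → ℝ) (m : ℤ) (n : ℕ) (p : ℝ) : ℝ :=
  sInf {S : ℝ | ∃ f : Fin n → (ℝ → ℝ), (∀ i, IsTestR (f i)) ∧ LinearIndependent ℝ f ∧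
    S = sSup {R : ℝ | ∃ g : ℝ → ℝ, g ∈ Submodule.span ℝ (Set.range f) ∧ g ≠ 0 ∧
      R = lForm a m p g / ∫ r in Set.Ioi (0:ℝ), (g r) ^ 2}}


/-!
As `p → +∞` the potential `(a + p)²` becomes large away from a set of small measure, on which the
form is controlled by Hardy's inequality; hence `μ_{n,0}(p) → +∞` and `μ_{n,0}` is not decreasing.

For large `r` we have `a(r) = b₀ r + c`. As `p → -∞` the well of `(a + p)²` at `r₀ = -(c + p) / b₀`
moves to infinity, and near it the form is that of a harmonic oscillator with levels `(2k + 1) b₀`,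
perturbed by the attractive Hardy term `-1 / (4 r²)`. With trial functions (Gaussian times
polynomial) cut off at distance of order `r₀`, the Hardy term gains a multiple of `r₀⁻²` and the
cutoff loses only `O(r₀⁻⁴)`, so `μ_{n,0}(p) < (2n - 1) b₀` for all `p` near `-∞`. An IMS
localization away from the origin shows `liminf μ_{n,0}(p) ≥ (2n - 1) b₀` as `p → -∞`.
Approaching the level from strictly below, `μ_{n,0}` is not increasing near `-∞`.

A function `a` that is not measurable, but whose square is, also has to be treated: there the
integral in `lForm` takes the junk value `0` for `p ≠ 0`, while `μ_{n,0}(0) > 0`.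
-/

section Oscillator

variable {b r₀ : ℝ} {h k q : ℝ → ℝ}

lemma integrable_sq_of_hasCompactSupport (hc : Continuous h) (hs : HasCompactSupport h) :
    Integrable (fun x => h x ^ 2) :=
  (hc.pow 2).integrable_of_hasCompactSupport (hs.comp_left (zero_pow two_ne_zero))

lemma integral_deriv_eq_zero_of_hasCompactSupport (h1 : ContDiff ℝ 1 h)
    (hs : HasCompactSupport h) : ∫ x, deriv h x = 0 :=
  integral_eq_zero_of_hasDerivAt_of_integrable
    (fun x => (h1.differentiable one_ne_zero x).hasDerivAt)
    (h1.continuous_deriv_one.integrable_of_hasCompactSupport hs.deriv)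
    (h1.continuous.integrable_of_hasCompactSupport hs)

/-- The annihilation operator `d/dx + b (x - r₀)` of the harmonic oscillator centred at `r₀`. -/
def annihilation (b r₀ : ℝ) (h : ℝ → ℝ) (x : ℝ) : ℝ :=
  deriv h x + b * (x - r₀) * h x

/-- The creation operator `-d/dx + b (x - r₀)`, the formal adjoint of `annihilation b r₀`. -/
def creation (b r₀ : ℝ) (h : ℝ → ℝ) (x : ℝ) : ℝ :=
  -deriv h x + b * (x - r₀) * h x

/-- The quadratic form `∫ h'² + b² (x - r₀)² h²` of the harmonic oscillator centred at `r₀`, whose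
eigenvalues are `(2 j + 1) b` for `j = 0, 1, 2, …`. -/
def oscillatorForm (b r₀ : ℝ) (h : ℝ → ℝ) : ℝ :=
  ∫ x, (deriv h x ^ 2 + b ^ 2 * (x - r₀) ^ 2 * h x ^ 2)

/-- The monomial `(x - r₀) ^ j` times the ground state of the oscillator centred at `r₀`; for
`j ≤ m` these span the first `m + 1` eigenspaces. -/
def gaussianMonomial (b r₀ : ℝ) (j : ℕ) (x : ℝ) : ℝ :=
  (x - r₀) ^ j * Real.exp (-b * (x - r₀) ^ 2 / 2)

lemma continuous_annihilation (h1 : ContDiff ℝ 1 h) : Continuous (annihilation b r₀ h) := by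
  have := h1.continuous
  have := h1.continuous_deriv_one
  unfold annihilation
  fun_prop

lemma hasCompactSupport_annihilation (hs : HasCompactSupport h) :
    HasCompactSupport (annihilation b r₀ h) :=
  hs.deriv.add hs.mul_left

lemma creation_eq_neg_annihilation (b r₀ : ℝ) (h : ℝ → ℝ) (x : ℝ) :
    creation b r₀ h x = -annihilation (-b) r₀ h x := by
  unfold creation annihilation
  ring

lemma integrable_annihilation_mul (h1 : ContDiff ℝ 1 h) (hs : HasCompactSupport h)
    (hq : Continuous q) : Integrable (fun x => annihilation b r₀ h x * q x) :=
  ((continuous_annihilation h1).mul hq).integrable_of_hasCompactSupport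
    (hasCompactSupport_annihilation hs).mul_right

lemma integral_creation_mul (k1 : ContDiff ℝ 1 k) (ks : HasCompactSupport k)
    (q1 : ContDiff ℝ 1 q) :
    ∫ x, creation b r₀ k x * q x = ∫ x, k x * annihilation b r₀ q x := by
  have hint : Integrable (fun x => creation b r₀ k x * q x) := by
    simpa only [creation_eq_neg_annihilation, neg_mul] using
      (integrable_annihilation_mul k1 ks q1.continuous).fun_neg
  have hint' : Integrable (fun x => k x * annihilation b r₀ q x) :=
    (k1.continuous.mul (continuous_annihilation q1)).integrable_of_hasCompactSupport ks.mul_right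
  have hderiv : ∀ x, deriv (fun y => k y * q y) x =
      k x * annihilation b r₀ q x - creation b r₀ k x * q x := fun x => by
    rw [deriv_fun_mul (k1.differentiable one_ne_zero x) (q1.differentiable one_ne_zero x)]
    unfold creation annihilation
    ring
  have hzero := integral_deriv_eq_zero_of_hasCompactSupport (k1.mul q1) ks.mul_right
  simp only [hderiv] at hzero
  rw [integral_sub hint' hint] at hzero
  linarith

lemma integral_annihilation_sq (h1 : ContDiff ℝ 1 h) (hs : HasCompactSupport h) :
    ∫ x, annihilation b r₀ h x ^ 2 = oscillatorForm b r₀ h - b * ∫ x, h x ^ 2 := by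
  have hc := h1.continuous
  have hc' := h1.continuous_deriv_one
  have hsq : HasCompactSupport fun x => h x ^ 2 := hs.comp_left (zero_pow two_ne_zero)
  set F : ℝ → ℝ := fun x => b * (x - r₀) * h x ^ 2
  have hF1 : ContDiff ℝ 1 F := by fun_prop
  have hFs : HasCompactSupport F := hsq.mul_left
  have hderiv : ∀ x, deriv F x = b * h x ^ 2 + 2 * b * (x - r₀) * h x * deriv h x := fun x => by
    have hd := (h1.differentiable one_ne_zero x).hasDerivAt
    have := (((hasDerivAt_id x).sub_const r₀).const_mul b).fun_mul (hd.fun_pow 2)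
    rw [HasDerivAt.deriv (f := F) this]
    simp only [id_eq, Nat.cast_ofNat, Nat.add_one_sub_one, pow_one]
    ring
  have hosc : Integrable fun x => deriv h x ^ 2 + b ^ 2 * (x - r₀) ^ 2 * h x ^ 2 :=
    (integrable_sq_of_hasCompactSupport hc' hs.deriv).fun_add
      (Continuous.integrable_of_hasCompactSupport (by fun_prop) hsq.mul_left)
  have hbsq := (integrable_sq_of_hasCompactSupport hc hs).const_mul b
  calc ∫ x, annihilation b r₀ h x ^ 2
      = ∫ x, ((deriv h x ^ 2 + b ^ 2 * (x - r₀) ^ 2 * h x ^ 2 - b * h x ^ 2) + deriv F x) := by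
        refine integral_congr_ae (.of_forall fun x => ?_)
        simp only [hderiv, annihilation]
        ring
    _ = oscillatorForm b r₀ h - b * ∫ x, h x ^ 2 := by
        rw [integral_add (hosc.sub' hbsq)
            (hF1.continuous_deriv_one.integrable_of_hasCompactSupport hFs.deriv),
          integral_deriv_eq_zero_of_hasCompactSupport hF1 hFs, integral_sub hosc hbsq,
          integral_const_mul, add_zero, oscillatorForm]

lemma integral_creation_sq (k1 : ContDiff ℝ 1 k) (ks : HasCompactSupport k) :
    ∫ x, creation b r₀ k x ^ 2 = oscillatorForm b r₀ k + b * ∫ x, k x ^ 2 := by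
  simp only [creation_eq_neg_annihilation, neg_sq, integral_annihilation_sq k1 ks, oscillatorForm]
  ring

lemma exists_hasCompactSupport_primitive (hc : Continuous h) (hs : HasCompactSupport h)
    (h0 : ∫ x, h x = 0) :
    ∃ F : ℝ → ℝ, HasCompactSupport F ∧ ∀ x, HasDerivAt F (h x) x := by
  obtain ⟨L, hL⟩ := hs.isCompact.isBounded.subset_closedBall 0
  have hsupp : ∀ x, L < |x| → h x = 0 := fun x hx =>
    Function.notMem_support.1 fun hxs => hx.not_ge (by simpa using hL (subset_tsupport h hxs))
  refine ⟨fun x => ∫ t in (-L - 1)..x, h t, ?_, fun x =>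
    intervalIntegral.integral_hasDerivAt_right (hc.intervalIntegrable _ _)
      (hc.stronglyMeasurableAtFilter _ _) hc.continuousAt⟩
  refine HasCompactSupport.intro (isCompact_closedBall (0 : ℝ) (|L| + 1)) fun x hx => ?_
  have hx : |L| + 1 < |x| := by simpa using hx
  rcases lt_abs.1 hx with hx | hx
  · rw [← h0]
    refine intervalIntegral.integral_eq_integral_of_support_subset fun y hy => ?_
    have hy : |y| ≤ L := not_lt.1 fun hLy => hy (hsupp y hLy)
    exact ⟨by linarith [neg_abs_le y], by linarith [le_abs_self y, le_abs_self L]⟩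
  · refine intervalIntegral.integral_zero_ae (.of_forall fun y hy => hsupp y ?_)
    rw [uIoc_of_ge (by linarith [le_abs_self L])] at hy
    linarith [hy.2, neg_le_abs y]

lemma exists_creation_eq (hc : Continuous h) (hs : HasCompactSupport h)
    (h0 : ∫ x, h x * gaussianMonomial b r₀ 0 x = 0) :
    ∃ k, ContDiff ℝ 1 k ∧ HasCompactSupport k ∧ ∀ x, creation b r₀ k x = h x := by
  have hgc : Continuous fun x => h x * gaussianMonomial b r₀ 0 x := by
    unfold gaussianMonomial
    fun_prop
  obtain ⟨F, hFs, hF⟩ := exists_hasCompactSupport_primitive hgc hs.mul_right h0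
  have hF1 : ContDiff ℝ 1 F :=
    contDiff_one_iff_deriv.2 ⟨fun x => (hF x).differentiableAt, by
      rwa [show deriv F = _ from funext fun x => (hF x).deriv]⟩
  refine ⟨fun x => -Real.exp (b * (x - r₀) ^ 2 / 2) * F x, by fun_prop, hFs.mul_left,
    fun x => ?_⟩
  have hexp : HasDerivAt (fun x => Real.exp (b * (x - r₀) ^ 2 / 2))
      (Real.exp (b * (x - r₀) ^ 2 / 2) * (b * (x - r₀))) x := by
    have := ((((hasDerivAt_id x).sub_const r₀).fun_pow 2).const_mul b).div_const 2
    exact (this.congr_deriv (g' := b * (x - r₀)) (by simp; ring)).exp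
  have hinv : Real.exp (b * (x - r₀) ^ 2 / 2) * Real.exp (-b * (x - r₀) ^ 2 / 2) = 1 := by
    rw [← Real.exp_add, ← Real.exp_zero]
    ring_nf
  rw [creation, (hexp.fun_neg.fun_mul (hF x)).deriv, gaussianMonomial]
  linear_combination h x * hinv

lemma contDiff_gaussianMonomial (j : ℕ) : ContDiff ℝ 1 (gaussianMonomial b r₀ j) := by
  unfold gaussianMonomial
  fun_prop

lemma annihilation_gaussianMonomial_succ (j : ℕ) (x : ℝ) :
    annihilation b r₀ (gaussianMonomial b r₀ (j + 1)) x =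
      (j + 1) * gaussianMonomial b r₀ j x := by
  have hsub := (hasDerivAt_id x).sub_const r₀
  have hexp := (((hsub.fun_pow 2).const_mul (-b)).div_const 2).exp
  have hmono : HasDerivAt (gaussianMonomial b r₀ (j + 1)) _ x := (hsub.fun_pow (j + 1)).fun_mul hexp
  rw [annihilation, hmono.deriv, gaussianMonomial, gaussianMonomial]
  simp
  ring

lemma integral_sub_const_mul_sq {u v : ℝ → ℝ} (huu : Integrable fun x => u x ^ 2)
    (huv : Integrable fun x => u x * v x) (hvv : Integrable fun x => v x ^ 2) (c : ℝ) :
    ∫ x, (u x - c * v x) ^ 2 =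
      (∫ x, u x ^ 2) - 2 * c * (∫ x, u x * v x) + c ^ 2 * ∫ x, v x ^ 2 := by
  rw [← integral_const_mul, ← integral_const_mul, ← integral_sub huu (huv.const_mul _),
    ← integral_add (huu.sub' (huv.const_mul _)) (hvv.const_mul _)]
  exact integral_congr_ae (.of_forall fun x => by ring)

/- With `h = creation k`, the function `k` is orthogonal to one Gaussian monomial less than `h`, and
`∫ (creation k)² = ∫ (annihilation k)² + 2 b ∫ k²`. -/
lemma two_mul_integral_sq_le_integral_annihilation_sq (hb : 0 < b) (m : ℕ) (h1 : ContDiff ℝ 1 h)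
    (hs : HasCompactSupport h)
    (horth : ∀ j < m, ∫ x, h x * gaussianMonomial b r₀ j x = 0) :
    2 * m * b * ∫ x, h x ^ 2 ≤ ∫ x, annihilation b r₀ h x ^ 2 := by
  induction m generalizing h with
  | zero => simpa using integral_nonneg fun x => sq_nonneg (annihilation b r₀ h x)
  | succ m ih =>
    obtain ⟨k, k1, ks, hk⟩ := exists_creation_eq h1.continuous hs (horth 0 m.succ_pos)
    have horthk : ∀ j < m, ∫ x, k x * gaussianMonomial b r₀ j x = 0 := fun j hj => by
      have hadj := integral_creation_mul (b := b) (r₀ := r₀) k1 ks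
        (contDiff_gaussianMonomial (b := b) (r₀ := r₀) (j + 1))
      simp only [hk, horth (j + 1) (by lia), annihilation_gaussianMonomial_succ,
        mul_left_comm (k _), integral_const_mul] at hadj
      exact (mul_eq_zero.1 hadj.symm).resolve_left (by positivity)
    have hladder : ∫ x, h x ^ 2 =
        (∫ x, annihilation b r₀ k x ^ 2) + 2 * b * ∫ x, k x ^ 2 := by
      simp only [← hk, integral_creation_sq k1 ks, integral_annihilation_sq k1 ks]
      ring
    have hpair : ∫ x, annihilation b r₀ h x * k x = ∫ x, h x ^ 2 := by
      have hadj := integral_creation_mul (b := b) (r₀ := r₀) k1 ks h1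
      simpa only [hk, ← sq, mul_comm (k _)] using hadj.symm
    set c : ℝ := 2 * (m + 1) * b with hc
    have hksq : c * ∫ x, k x ^ 2 ≤ ∫ x, h x ^ 2 := by
      rw [hladder, hc]
      linarith [ih k1 ks horthk]
    have hpos : 0 ≤ ∫ x, (annihilation b r₀ h x - c * k x) ^ 2 :=
      integral_nonneg fun x => sq_nonneg _
    rw [integral_sub_const_mul_sq (integrable_sq_of_hasCompactSupport (continuous_annihilation h1)
      (hasCompactSupport_annihilation hs)) (integrable_annihilation_mul h1 hs k1.continuous)
      (integrable_sq_of_hasCompactSupport k1.continuous ks), hpair] at hpos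
    have hcpos : 0 < c := by positivity
    push_cast
    nlinarith [mul_le_mul_of_nonneg_left hksq hcpos.le]

theorem mul_integral_sq_le_oscillatorForm (hb : 0 < b) (m : ℕ) (h1 : ContDiff ℝ 1 h)
    (hs : HasCompactSupport h)
    (horth : ∀ j < m, ∫ x, h x * gaussianMonomial b r₀ j x = 0) :
    (2 * m + 1) * b * ∫ x, h x ^ 2 ≤ oscillatorForm b r₀ h := by
  have := two_mul_integral_sq_le_integral_annihilation_sq hb m h1 hs horth
  rw [integral_annihilation_sq h1 hs] at this
  linarith

end Oscillator

section GaussianFunctional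

open Polynomial

variable {b : ℝ}

lemma integrable_eval_mul_gaussian (hb : 0 < b) (P : ℝ[X]) :
    Integrable (fun x => P.eval x * Real.exp (-b * x ^ 2)) := by
  induction P using Polynomial.induction_on' with
  | add p q hp hq => simpa only [eval_add, add_mul] using hp.fun_add hq
  | monomial n c =>
    have := integrable_rpow_mul_exp_neg_mul_sq hb (s := n) (by linarith [n.cast_nonneg (α := ℝ)])
    simpa only [eval_monomial, Real.rpow_natCast, mul_assoc] using this.const_mul c

/-- Integration of polynomials against the squared ground state `exp (-b x²)` of the oscillator. -/
def gaussianFunctional (hb : 0 < b) : ℝ[X] →ₗ[ℝ] ℝ where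
  toFun P := ∫ x, P.eval x * Real.exp (-b * x ^ 2)
  map_add' P Q := by
    simp only [eval_add, add_mul]
    exact integral_add (integrable_eval_mul_gaussian hb P) (integrable_eval_mul_gaussian hb Q)
  map_smul' c P := by
    simp only [eval_smul, smul_eq_mul, mul_assoc, integral_const_mul, RingHom.id_apply]

lemma gaussianFunctional_eq_integral_sub (hb : 0 < b) (r₀ : ℝ) (P : ℝ[X]) :
    gaussianFunctional hb P = ∫ x, P.eval (x - r₀) * Real.exp (-b * (x - r₀) ^ 2) :=
  (integral_sub_right_eq_self (fun x => P.eval x * Real.exp (-b * x ^ 2)) r₀).symm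

lemma gaussianFunctional_sq_nonneg (hb : 0 < b) (P : ℝ[X]) : 0 ≤ gaussianFunctional hb (P ^ 2) :=
  integral_nonneg fun x => by
    rw [eval_pow]
    positivity

lemma gaussianFunctional_derivative (hb : 0 < b) (P : ℝ[X]) :
    gaussianFunctional hb (derivative P) = 2 * b * gaussianFunctional hb (X * P) := by
  have hderiv : ∀ x, HasDerivAt (fun x => P.eval x * Real.exp (-b * x ^ 2))
      ((derivative P - (2 * b) • (X * P)).eval x * Real.exp (-b * x ^ 2)) x := fun x => by
    refine ((P.hasDerivAt x).fun_mul ((hasDerivAt_pow 2 x).const_mul (-b)).exp).congr_deriv ?_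
    simp
    ring
  have hzero : gaussianFunctional hb (derivative P - (2 * b) • (X * P)) = 0 :=
    integral_eq_zero_of_hasDerivAt_of_integrable hderiv (integrable_eval_mul_gaussian hb _)
      (integrable_eval_mul_gaussian hb P)
  rwa [map_sub, map_smul, smul_eq_mul, sub_eq_zero] at hzero

/-- The Ornstein–Uhlenbeck operator `P ↦ -P'' + 2 b x P'`, the harmonic oscillator after conjugation
by its ground state. -/
def ornsteinUhlenbeck (b : ℝ) (P : ℝ[X]) : ℝ[X] :=
  (2 * b) • (X * derivative P) - derivative (derivative P)

lemma derivative_ornsteinUhlenbeck (b : ℝ) (P : ℝ[X]) :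
    derivative (ornsteinUhlenbeck b P) =
      ornsteinUhlenbeck b (derivative P) + (2 * b) • derivative P := by
  simp only [ornsteinUhlenbeck, derivative_sub, derivative_smul, derivative_mul, derivative_X,
    one_mul, smul_add]
  ring

lemma gaussianFunctional_mul_ornsteinUhlenbeck (hb : 0 < b) (P Q : ℝ[X]) :
    gaussianFunctional hb (Q * ornsteinUhlenbeck b P) =
      gaussianFunctional hb (derivative Q * derivative P) := by
  have hibp := gaussianFunctional_derivative hb (Q * derivative P)
  have hexpand : Q * ornsteinUhlenbeck b P =
      (2 * b) • (X * (Q * derivative P)) - Q * derivative (derivative P) := by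
    rw [ornsteinUhlenbeck, mul_sub, mul_smul_comm, mul_left_comm]
  rw [derivative_mul, map_add] at hibp
  rw [hexpand, map_sub, map_smul, smul_eq_mul]
  linarith

lemma gaussianFunctional_ornsteinUhlenbeck_sq (hb : 0 < b) (P : ℝ[X]) :
    gaussianFunctional hb (ornsteinUhlenbeck b P ^ 2) =
      gaussianFunctional hb (derivative (derivative P) ^ 2)
        + 2 * b * gaussianFunctional hb (derivative P ^ 2) := by
  rw [sq, gaussianFunctional_mul_ornsteinUhlenbeck, derivative_ornsteinUhlenbeck, add_mul, map_add,
    smul_mul_assoc, map_smul, mul_comm, gaussianFunctional_mul_ornsteinUhlenbeck, smul_eq_mul,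
    sq, sq]

lemma gaussianFunctional_sub_smul_sq (hb : 0 < b) (c : ℝ) (P Q : ℝ[X]) :
    gaussianFunctional hb ((P - c • Q) ^ 2) = gaussianFunctional hb (P ^ 2)
      - 2 * c * gaussianFunctional hb (Q * P) + c ^ 2 * gaussianFunctional hb (Q ^ 2) := by
  have hexpand : (P - c • Q) ^ 2 = P ^ 2 - (2 * c) • (Q * P) + c ^ 2 • Q ^ 2 := by
    simp only [smul_eq_C_mul, map_mul, map_pow, map_ofNat]
    ring
  simp only [hexpand, map_add, map_sub, map_smul, smul_eq_mul]

/- The eigenvalues of the Ornstein–Uhlenbeck operator on polynomials of degree at most `d` are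
`0, 2b, …, 2bd`. -/
lemma gaussianFunctional_derivative_sq_le (hb : 0 < b) {d : ℕ} {P : ℝ[X]} (hP : P.natDegree ≤ d) :
    gaussianFunctional hb (derivative P ^ 2) ≤ 2 * b * d * gaussianFunctional hb (P ^ 2) := by
  induction d generalizing P with
  | zero =>
    rw [derivative_of_natDegree_zero (Nat.le_zero.1 hP)]
    simp
  | succ d ih =>
    have ih' := ih ((natDegree_derivative_le P).trans (Nat.sub_le_of_le_add hP))
    set c : ℝ := 2 * b * (d + 1) with hc
    have hcpos : 0 < c := by positivity
    have hsq := gaussianFunctional_sq_nonneg hb (ornsteinUhlenbeck b P - c • P)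
    rw [gaussianFunctional_sub_smul_sq, gaussianFunctional_mul_ornsteinUhlenbeck, ← sq,
      gaussianFunctional_ornsteinUhlenbeck_sq] at hsq
    push_cast
    rw [← hc]
    refine le_of_mul_le_mul_left ?_ hcpos
    linarith

lemma gaussianFunctional_X_mul_sq_le (hb : 0 < b) {d : ℕ} {P : ℝ[X]} (hP : P.natDegree ≤ d) :
    gaussianFunctional hb ((X * P) ^ 2) ≤ (2 * d + 1) / b * gaussianFunctional hb (P ^ 2) := by
  have hibp := gaussianFunctional_derivative hb (X * P ^ 2)
  have hderiv : derivative (X * P ^ 2) = P ^ 2 + (2 : ℝ) • (X * P * derivative P) := by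
    rw [derivative_mul, derivative_X, derivative_sq, ofNat_smul_eq_nsmul, nsmul_eq_mul]
    simp only [map_ofNat, Nat.cast_ofNat]
    ring
  rw [hderiv, map_add, map_smul, smul_eq_mul, ← mul_assoc, ← sq, ← mul_pow] at hibp
  have hsq := gaussianFunctional_sq_nonneg hb (derivative P - b • (X * P))
  rw [gaussianFunctional_sub_smul_sq] at hsq
  rw [div_mul_eq_mul_div, le_div_iff₀ hb]
  refine le_of_mul_le_mul_left ?_ hb
  linear_combination hsq + gaussianFunctional_derivative_sq_le hb hP - b * hibp

lemma gaussianFunctional_X_mul_X_mul_sq_le (hb : 0 < b) {d : ℕ} {P : ℝ[X]}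
    (hP : P.natDegree ≤ d) :
    gaussianFunctional hb ((X * (X * P)) ^ 2) ≤
      (2 * d + 3) / b * ((2 * d + 1) / b) * gaussianFunctional hb (P ^ 2) := by
  have hXP : (X * P).natDegree ≤ d + 1 :=
    natDegree_mul_le.trans (by linarith [natDegree_X_le (R := ℝ)])
  calc gaussianFunctional hb ((X * (X * P)) ^ 2)
      ≤ (2 * (d + 1 : ℕ) + 1) / b * gaussianFunctional hb ((X * P) ^ 2) :=
        gaussianFunctional_X_mul_sq_le hb hXP
    _ ≤ (2 * (d + 1 : ℕ) + 1) / b * ((2 * d + 1) / b * gaussianFunctional hb (P ^ 2)) := by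
        gcongr
        exact gaussianFunctional_X_mul_sq_le hb hP
    _ = (2 * d + 3) / b * ((2 * d + 1) / b) * gaussianFunctional hb (P ^ 2) := by
        push_cast
        ring

end GaussianFunctional

section TrialFunctions

open Polynomial

/-- A fixed smooth cutoff on `ℝ`, equal to `1` on `[-1, 1]` and to `0` outside `(-2, 2)`. -/
def cutoff : ContDiffBump (0 : ℝ) := ⟨1, 2, one_pos, one_lt_two⟩

lemma cutoff_eq_one {x : ℝ} (hx : |x| ≤ 1) : cutoff x = 1 :=
  cutoff.one_of_mem_closedBall (by simpa [cutoff] using hx)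

lemma cutoff_eq_zero {x : ℝ} (hx : 2 ≤ |x|) : cutoff x = 0 :=
  cutoff.zero_of_le_dist (by simpa [cutoff] using hx)

lemma deriv_cutoff_eq_zero {x : ℝ} (hx : |x| < 1) : deriv cutoff x = 0 := by
  have hloc : cutoff =ᶠ[nhds x] fun _ => 1 := by
    filter_upwards [(isOpen_lt continuous_abs continuous_const).mem_nhds hx] with y hy
    exact cutoff_eq_one (le_of_lt hy)
  rw [hloc.deriv_eq, deriv_const]

lemma exists_sq_deriv_cutoff_le : ∃ C, 0 ≤ C ∧ ∀ x, deriv cutoff x ^ 2 ≤ C := by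
  obtain ⟨C, hC⟩ := cutoff.hasCompactSupport.deriv.exists_bound_of_continuous
    (cutoff.contDiff.continuous_deriv_one)
  exact ⟨C ^ 2, sq_nonneg C, fun x => sq_le_sq' (abs_le.1 (hC x)).1 (abs_le.1 (hC x)).2⟩

/-- The ground state of the oscillator centred at `r₀`, cut off to `|x - r₀| < 2 R`. -/
def cutoffGaussian (b r₀ R x : ℝ) : ℝ :=
  cutoff ((x - r₀) / R) * Real.exp (-b * (x - r₀) ^ 2 / 2)

/-- The trial function `P(x - r₀)` times `cutoffGaussian b r₀ R`, an approximate eigenfunction of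
the oscillator when `P` is a Hermite polynomial and `R` is large. -/
def trialFunction (b r₀ R : ℝ) (P : ℝ[X]) (x : ℝ) : ℝ :=
  cutoffGaussian b r₀ R x * P.eval (x - r₀)

variable {b r₀ R : ℝ}

lemma contDiff_cutoffGaussian : ContDiff ℝ (⊤ : ℕ∞) (cutoffGaussian b r₀ R) := by
  have hcut : ContDiff ℝ (⊤ : ℕ∞) cutoff := cutoff.contDiff
  unfold cutoffGaussian
  fun_prop

lemma cutoffGaussian_eq_zero (hR : 0 < R) {x : ℝ} (hx : 2 * R ≤ |x - r₀|) :
    cutoffGaussian b r₀ R x = 0 := by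
  rw [cutoffGaussian, cutoff_eq_zero, zero_mul]
  rwa [abs_div, abs_of_pos hR, le_div_iff₀ hR]

lemma cutoffGaussian_ne_zero (hR : 0 < R) {x : ℝ} (hx : |x - r₀| ≤ R) :
    cutoffGaussian b r₀ R x ≠ 0 := by
  rw [cutoffGaussian, cutoff_eq_one, one_mul]
  · exact (Real.exp_pos _).ne'
  · rwa [abs_div, abs_of_pos hR, div_le_one hR]

lemma contDiff_trialFunction (P : ℝ[X]) : ContDiff ℝ 1 (trialFunction b r₀ R P) := by
  have hw : ContDiff ℝ 1 (cutoffGaussian b r₀ R) := contDiff_cutoffGaussian.of_le (by simp)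
  have hP : ContDiff ℝ 1 fun x => P.eval x := by simpa using P.contDiff_aeval (𝕜 := ℝ) 1
  unfold trialFunction
  fun_prop

lemma hasCompactSupport_trialFunction (hR : 0 < R) (P : ℝ[X]) :
    HasCompactSupport (trialFunction b r₀ R P) := by
  refine HasCompactSupport.intro (isCompact_closedBall r₀ (2 * R)) fun x hx => ?_
  rw [trialFunction, cutoffGaussian_eq_zero hR (le_of_lt ?_), zero_mul]
  simpa [Real.dist_eq] using hx

lemma annihilation_trialFunction (P : ℝ[X]) (x : ℝ) :
    annihilation b r₀ (trialFunction b r₀ R P) x =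
      (deriv cutoff ((x - r₀) / R) / R * P.eval (x - r₀)
        + cutoff ((x - r₀) / R) * (derivative P).eval (x - r₀))
          * Real.exp (-b * (x - r₀) ^ 2 / 2) := by
  have hsub := (hasDerivAt_id x).sub_const r₀
  have hcut := ((cutoff.contDiff (n := 1)).differentiable one_ne_zero
    ((x - r₀) / R)).hasDerivAt.comp x (hsub.div_const R)
  have hexp := (((hsub.fun_pow 2).const_mul (-b)).div_const 2).exp
  have htrial : HasDerivAt (trialFunction b r₀ R P) _ x :=
    (hcut.fun_mul hexp).fun_mul ((P.hasDerivAt (x - r₀)).comp_sub_const x r₀)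
  rw [annihilation, htrial.deriv, trialFunction, cutoffGaussian]
  simp
  ring

lemma exp_half_sq (t : ℝ) : Real.exp (t / 2) ^ 2 = Real.exp t := by
  rw [← Real.exp_nat_mul]
  congr 1
  push_cast
  ring

lemma one_le_pow_four_div_pow_four (hR : 0 < R) {y : ℝ} (hy : R ≤ |y|) : 1 ≤ y ^ 4 / R ^ 4 := by
  rw [one_le_div (by positivity), ← Even.pow_abs (by decide) y]
  gcongr

lemma sq_trialFunction_ge (hR : 0 < R) (P : ℝ[X]) (x : ℝ) :
    (P ^ 2 - (1 / R ^ 4) • (X * (X * P)) ^ 2).eval (x - r₀) * Real.exp (-b * (x - r₀) ^ 2) ≤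
      trialFunction b r₀ R P x ^ 2 := by
  rw [trialFunction, cutoffGaussian, mul_right_comm, mul_pow _ (Real.exp _), exp_half_sq]
  gcongr
  simp only [eval_sub, eval_smul, eval_pow, eval_mul, eval_X, smul_eq_mul]
  generalize x - r₀ = y
  rcases le_or_gt |y / R| 1 with hy | hy
  · rw [cutoff_eq_one hy, one_mul]
    exact sub_le_self _ (by positivity)
  · rw [abs_div, abs_of_pos hR, one_lt_div hR] at hy
    have := mul_le_mul_of_nonneg_right (one_le_pow_four_div_pow_four hR hy.le)
      (sq_nonneg (P.eval y))
    linear_combination this + sq_nonneg (cutoff (y / R) * P.eval y)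

lemma sq_annihilation_trialFunction_le (hR : 1 ≤ R) {C : ℝ}
    (hC : ∀ x, deriv cutoff x ^ 2 ≤ C) (P : ℝ[X]) (x : ℝ) :
    annihilation b r₀ (trialFunction b r₀ R P) x ^ 2 ≤
      (derivative P ^ 2 + ((2 * C + 2) / R ^ 4) •
        ((X * (X * P)) ^ 2 + (X * (X * derivative P)) ^ 2)).eval (x - r₀)
          * Real.exp (-b * (x - r₀) ^ 2) := by
  rw [annihilation_trialFunction, mul_pow, exp_half_sq]
  gcongr
  simp only [eval_add, eval_smul, eval_pow, eval_mul, eval_X, smul_eq_mul]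
  have hC0 : 0 ≤ C := (sq_nonneg _).trans (hC 0)
  have hR0 : 0 < R := one_pos.trans_le hR
  generalize x - r₀ = y
  generalize P.eval y = p, (derivative P).eval y = q
  rcases lt_or_ge |y / R| 1 with hy | hy
  · rw [deriv_cutoff_eq_zero hy, cutoff_eq_one hy.le, zero_div, zero_mul, zero_add, one_mul]
    exact le_add_of_nonneg_right (by positivity)
  · rw [abs_div, abs_of_pos hR0, one_le_div hR0] at hy
    have hu : (deriv cutoff (y / R) / R) ^ 2 ≤ C := by
      rw [div_pow]
      exact (div_le_self (sq_nonneg _) (one_le_pow₀ hR)).trans (hC _)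
    have hv : cutoff (y / R) ^ 2 ≤ 1 := pow_le_one₀ cutoff.nonneg cutoff.le_one
    calc (deriv cutoff (y / R) / R * p + cutoff (y / R) * q) ^ 2
        ≤ 2 * ((deriv cutoff (y / R) / R) ^ 2 * p ^ 2 + cutoff (y / R) ^ 2 * q ^ 2) := by
          rw [← mul_pow, ← mul_pow]
          exact add_sq_le
      _ ≤ 2 * (C * p ^ 2 + 1 * q ^ 2) := by gcongr
      _ ≤ (2 * C + 2) * 1 * (p ^ 2 + q ^ 2) := by
          linear_combination 2 * sq_nonneg p + 2 * C * sq_nonneg q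
      _ ≤ (2 * C + 2) * (y ^ 4 / R ^ 4) * (p ^ 2 + q ^ 2) := by
          gcongr
          exact one_le_pow_four_div_pow_four hR0 hy
      _ ≤ q ^ 2 + (2 * C + 2) / R ^ 4 * ((y * (y * p)) ^ 2 + (y * (y * q)) ^ 2) := by
          linear_combination sq_nonneg q

lemma integral_sq_trialFunction_ge (hb : 0 < b) (hR : 0 < R) {d : ℕ} {P : ℝ[X]}
    (hP : P.natDegree ≤ d) :
    (1 - (2 * d + 3) / b * ((2 * d + 1) / b) / R ^ 4) * gaussianFunctional hb (P ^ 2) ≤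
      ∫ x, trialFunction b r₀ R P x ^ 2 := by
  have hmono := integral_mono
    ((integrable_eval_mul_gaussian hb (P ^ 2 - (1 / R ^ 4) • (X * (X * P)) ^ 2)).comp_sub_right r₀)
    (integrable_sq_of_hasCompactSupport (contDiff_trialFunction P).continuous
      (hasCompactSupport_trialFunction hR P)) (sq_trialFunction_ge hR P)
  rw [← gaussianFunctional_eq_integral_sub hb, map_sub, map_smul, smul_eq_mul] at hmono
  have hX := mul_le_mul_of_nonneg_left (gaussianFunctional_X_mul_X_mul_sq_le hb hP)
    (one_div_nonneg.2 (pow_nonneg hR.le 4))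
  linear_combination hmono + hX

lemma integral_sq_annihilation_trialFunction_le (hb : 0 < b) (hR : 1 ≤ R) {C : ℝ} (hC0 : 0 ≤ C)
    (hC : ∀ x, deriv cutoff x ^ 2 ≤ C) {d : ℕ} {P : ℝ[X]} (hP : P.natDegree ≤ d) :
    ∫ x, annihilation b r₀ (trialFunction b r₀ R P) x ^ 2 ≤
      (2 * b * d + (2 * C + 2) * ((2 * d + 3) / b * ((2 * d + 1) / b)) * (1 + 2 * b * d) / R ^ 4)
        * gaussianFunctional hb (P ^ 2) := by
  have hR0 : 0 < R := one_pos.trans_le hR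
  have hmono := integral_mono (integrable_sq_of_hasCompactSupport
      (continuous_annihilation (contDiff_trialFunction P))
      (hasCompactSupport_annihilation (hasCompactSupport_trialFunction hR0 P)))
    ((integrable_eval_mul_gaussian hb _).comp_sub_right r₀)
    (sq_annihilation_trialFunction_le (b := b) hR hC P)
  rw [← gaussianFunctional_eq_integral_sub hb, map_add, map_smul, map_add, smul_eq_mul] at hmono
  have hderiv := gaussianFunctional_derivative_sq_le hb hP
  have hX := gaussianFunctional_X_mul_X_mul_sq_le hb hP
  have hX' := gaussianFunctional_X_mul_X_mul_sq_le hb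
    ((natDegree_derivative_le P).trans ((Nat.sub_le _ _).trans hP))
  set K := (2 * d + 3) / b * ((2 * d + 1) / b)
  have hK : 0 ≤ K := by positivity
  calc _ ≤ _ := hmono
    _ ≤ 2 * b * d * gaussianFunctional hb (P ^ 2) + (2 * C + 2) / R ^ 4 *
        (K * gaussianFunctional hb (P ^ 2)
          + K * (2 * b * d * gaussianFunctional hb (P ^ 2))) := by
      gcongr
      exact hX'.trans (by gcongr)
    _ = _ := by ring

/- The cutoff only acts where `|x - r₀| ≥ R`, and there `1 ≤ (x - r₀)⁴ / R⁴`, so the error is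
controlled by fourth Gaussian moments; any power of `R` larger than `2` would do. -/
theorem exists_eventually_oscillatorForm_trialFunction_le (hb : 0 < b) (d : ℕ) :
    ∃ C, ∀ᶠ R in atTop, ∀ (r₀ : ℝ) (P : ℝ[X]), P.natDegree ≤ d →
      oscillatorForm b r₀ (trialFunction b r₀ R P) ≤
        ((2 * d + 1) * b + C / R ^ 4) * ∫ x, trialFunction b r₀ R P x ^ 2 := by
  obtain ⟨C, hC0, hC⟩ := exists_sq_deriv_cutoff_le
  set K : ℝ := (2 * d + 3) / b * ((2 * d + 1) / b) with hKdef
  set L : ℝ := (2 * C + 2) * K * (1 + 2 * b * d)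
  have hK : 0 ≤ K := by positivity
  refine ⟨4 * b * d * K + 2 * L, ?_⟩
  filter_upwards [eventually_ge_atTop 1,
    (tendsto_pow_atTop (α := ℝ) four_ne_zero).eventually_ge_atTop (2 * K)] with R hR hRK r₀ P hP
  have hR0 : 0 < R := one_pos.trans_le hR
  have hKR : K / R ^ 4 ≤ 1 / 2 := by
    rw [div_le_iff₀ (by positivity)]
    linarith
  have hsq := integral_sq_trialFunction_ge (r₀ := r₀) hb hR0 hP
  have hann := integral_sq_annihilation_trialFunction_le (r₀ := r₀) hb hR hC0 hC hP
  rw [integral_annihilation_sq (contDiff_trialFunction P) (hasCompactSupport_trialFunction hR0 P)]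
    at hann
  rw [← hKdef] at hsq hann
  set N := gaussianFunctional hb (P ^ 2)
  set S := ∫ x, trialFunction b r₀ R P x ^ 2
  have hN : 0 ≤ N := gaussianFunctional_sq_nonneg hb P
  have hNS : N ≤ 2 * S := by linarith [mul_le_mul_of_nonneg_right hKR hN]
  calc oscillatorForm b r₀ (trialFunction b r₀ R P)
      ≤ 2 * b * d * N + L / R ^ 4 * N + b * S := by linarith
    _ ≤ 2 * b * d * (S + K / R ^ 4 * N) + L / R ^ 4 * N + b * S := by
        gcongr
        linarith
    _ ≤ 2 * b * d * (S + K / R ^ 4 * (2 * S)) + L / R ^ 4 * (2 * S) + b * S := by gcongr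
    _ = ((2 * d + 1) * b + (4 * b * d * K + 2 * L) / R ^ 4) * S := by ring

end TrialFunctions

namespace IsTestR

variable {g w : ℝ → ℝ}

lemma contDiff_one (hg : IsTestR g) : ContDiff ℝ 1 g := hg.1.of_le (by simp)

lemma continuous (hg : IsTestR g) : Continuous g := hg.1.continuous

lemma hasDerivAt (hg : IsTestR g) (x : ℝ) : HasDerivAt g (deriv g x) x :=
  (hg.contDiff_one.differentiable one_ne_zero x).hasDerivAt

lemma integrable_sq (hg : IsTestR g) : Integrable fun x => g x ^ 2 :=
  integrable_sq_of_hasCompactSupport hg.continuous hg.2.1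

lemma eq_zero (hg : IsTestR g) {x : ℝ} (hx : x ≤ 0) : g x = 0 :=
  image_eq_zero_of_notMem_tsupport fun hxs => hx.not_gt (hg.2.2 hxs)

lemma deriv_eq_zero (hg : IsTestR g) {x : ℝ} (hx : x ≤ 0) : deriv g x = 0 :=
  Function.notMem_support.1 fun hxs => hx.not_gt (hg.2.2 (support_deriv_subset hxs))

lemma pos_of_ne_zero (hg : IsTestR g) {x : ℝ} (hx : g x ≠ 0) : 0 < x :=
  not_le.1 fun hx0 => hx (hg.eq_zero hx0)

lemma mul_left (hg : IsTestR g) (hw : ∀ x > 0, ContDiffAt ℝ (⊤ : ℕ∞) w x) :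
    IsTestR fun x => w x * g x := by
  have hsub : tsupport (fun x => w x * g x) ⊆ tsupport g := tsupport_mul_subset_right
  refine ⟨contDiff_iff_contDiffAt.2 fun x => ?_, hg.2.1.mul_left, hsub.trans hg.2.2⟩
  by_cases hx : x ∈ tsupport fun x => w x * g x
  · exact (hw x (hg.2.2 (hsub hx))).mul hg.1.contDiffAt
  · exact contDiffAt_const.congr_of_eventuallyEq (notMem_tsupport_iff_eventuallyEq.1 hx)

lemma inv_mul (hg : IsTestR g) : IsTestR fun x => x⁻¹ * g x :=
  hg.mul_left fun _ hx => contDiffAt_inv ℝ hx.ne'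

lemma setIntegral_sq (hg : IsTestR g) : ∫ x in Ioi (0 : ℝ), g x ^ 2 = ∫ x, g x ^ 2 :=
  setIntegral_eq_integral_of_forall_compl_eq_zero fun x hx => by
    rw [hg.eq_zero (not_lt.1 hx), zero_pow two_ne_zero]

lemma integrable_mul_sq {W : ℝ → ℝ} (hg : IsTestR g) (hW : LocallyIntegrableOn W (Ioi 0)) :
    Integrable fun x => W x * g x ^ 2 := by
  have hsub : Function.support (fun x => W x * g x ^ 2) ⊆ tsupport g := fun x hx =>
    subset_tsupport g fun hgx => hx (by simp [hgx])
  rw [← integrableOn_iff_integrable_of_support_subset hsub]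
  exact (hW.integrableOn_compact_subset hg.2.2 hg.2.1.isCompact).mul_continuousOn
    (hg.continuous.pow 2).continuousOn hg.2.1.isCompact

end IsTestR

section QuadraticForm

/-- The integrand of `lForm a m p g`, considered on the whole line. -/
def lDensity (a : ℝ → ℝ) (m : ℤ) (p : ℝ) (g : ℝ → ℝ) (r : ℝ) : ℝ :=
  deriv g r ^ 2 + ((m : ℝ) ^ 2 - 1 / 4) * r⁻¹ ^ 2 * g r ^ 2 + (a r + p) ^ 2 * g r ^ 2

/-- The expression `√r (g / √r)'`, in terms of which `g'² - g² / (4 r²)` is a square up to a total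
derivative (Hardy's inequality). -/
def hardyDeriv (g : ℝ → ℝ) (r : ℝ) : ℝ :=
  deriv g r - r⁻¹ * g r / 2

/-- The nonnegative density that differs from `lDensity a m p g` by half the derivative
of `g² / r`. -/
def hardyDensity (a : ℝ → ℝ) (m : ℤ) (p : ℝ) (g : ℝ → ℝ) (r : ℝ) : ℝ :=
  hardyDeriv g r ^ 2 + (m : ℝ) ^ 2 * (r⁻¹ * g r) ^ 2 + (a r + p) ^ 2 * g r ^ 2

lemma hardyDensity_nonneg (a : ℝ → ℝ) (m : ℤ) (p : ℝ) (g : ℝ → ℝ) (r : ℝ) :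
    0 ≤ hardyDensity a m p g r := by
  unfold hardyDensity
  positivity

lemma integral_add_eq_of_integral_eq_zero {α : Type*} [MeasurableSpace α] {μ : Measure α}
    {f k : α → ℝ} (hk : Integrable k μ) (hk0 : ∫ x, k x ∂μ = 0) :
    ∫ x, (f x + k x) ∂μ = ∫ x, f x ∂μ := by
  by_cases hf : Integrable f μ
  · rw [integral_add hf hk, hk0, add_zero]
  · rw [integral_undef hf]
    exact integral_undef fun hfk => hf ((integrable_add_iff_integrable_left hk).1 hfk)

end QuadraticForm

namespace IsTestR

variable {g : ℝ → ℝ} {a : ℝ → ℝ} {m : ℤ} {p : ℝ}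

lemma continuous_hardyDeriv (hg : IsTestR g) : Continuous (hardyDeriv g) :=
  hg.contDiff_one.continuous_deriv_one.sub (hg.inv_mul.continuous.div_const 2)

lemma hasCompactSupport_hardyDeriv (hg : IsTestR g) : HasCompactSupport (hardyDeriv g) :=
  hg.2.1.deriv.sub (hg.inv_mul.2.1.mul_right (f' := fun _ => 2⁻¹))

lemma integrable_sq_hardyDeriv (hg : IsTestR g) : Integrable fun x => hardyDeriv g x ^ 2 :=
  integrable_sq_of_hasCompactSupport hg.continuous_hardyDeriv hg.hasCompactSupport_hardyDeriv

lemma contDiff_mul_inv_mul (hg : IsTestR g) : ContDiff ℝ 1 fun x => g x * (x⁻¹ * g x) :=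
  hg.contDiff_one.mul hg.inv_mul.contDiff_one

lemma deriv_mul_inv_mul (hg : IsTestR g) (x : ℝ) :
    deriv (fun x => g x * (x⁻¹ * g x)) x = 2 * (x⁻¹ * g x) * hardyDeriv g x := by
  rcases le_or_gt x 0 with hx | hx
  · rw [((hg.hasDerivAt x).fun_mul (hg.inv_mul.hasDerivAt x)).deriv, hg.eq_zero hx,
      hg.deriv_eq_zero hx]
    simp
  · have hinv := (hasDerivAt_inv hx.ne').fun_mul (hg.hasDerivAt x)
    rw [((hg.hasDerivAt x).fun_mul hinv).deriv, hardyDeriv]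
    field_simp
    ring

lemma integrable_deriv_mul_inv_mul (hg : IsTestR g) :
    Integrable (deriv fun x => g x * (x⁻¹ * g x)) :=
  hg.contDiff_mul_inv_mul.continuous_deriv_one.integrable_of_hasCompactSupport
    hg.2.1.mul_right.deriv

lemma lForm_eq_integral_lDensity (hg : IsTestR g) : lForm a m p g = ∫ x, lDensity a m p g x :=
  setIntegral_eq_integral_of_forall_compl_eq_zero fun x hx => by
    rw [hg.eq_zero (not_lt.1 hx), hg.deriv_eq_zero (not_lt.1 hx)]
    ring

lemma lDensity_eq_hardyDensity_add (hg : IsTestR g) (x : ℝ) :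
    lDensity a m p g x =
      hardyDensity a m p g x + deriv (fun x => g x * (x⁻¹ * g x)) x / 2 := by
  rw [hg.deriv_mul_inv_mul, lDensity, hardyDensity, hardyDeriv]
  ring

lemma lForm_eq_integral_hardyDensity (hg : IsTestR g) :
    lForm a m p g = ∫ x, hardyDensity a m p g x := by
  simp only [hg.lForm_eq_integral_lDensity, hg.lDensity_eq_hardyDensity_add]
  refine integral_add_eq_of_integral_eq_zero (hg.integrable_deriv_mul_inv_mul.div_const 2) ?_
  rw [integral_div, integral_deriv_eq_zero_of_hasCompactSupport hg.contDiff_mul_inv_mul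
    hg.2.1.mul_right, zero_div]

lemma lForm_nonneg (hg : IsTestR g) : 0 ≤ lForm a m p g :=
  hg.lForm_eq_integral_hardyDensity ▸ integral_nonneg (hardyDensity_nonneg a m p g)

lemma integrable_hardyDensity (hg : IsTestR g)
    (hW : LocallyIntegrableOn (fun r => (a r + p) ^ 2) (Ioi 0)) :
    Integrable (hardyDensity a m p g) :=
  (hg.integrable_sq_hardyDeriv.add (hg.inv_mul.integrable_sq.const_mul _)).add
    (hg.integrable_mul_sq hW)

lemma integrable_lDensity (hg : IsTestR g)
    (hW : LocallyIntegrableOn (fun r => (a r + p) ^ 2) (Ioi 0)) :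
    Integrable (lDensity a m p g) := by
  simp only [funext hg.lDensity_eq_hardyDensity_add]
  exact (hg.integrable_hardyDensity hW).fun_add (hg.integrable_deriv_mul_inv_mul.div_const 2)

lemma integral_hardyDeriv_add_integral_potential_le_lForm (hg : IsTestR g)
    (hW : LocallyIntegrableOn (fun r => (a r + p) ^ 2) (Ioi 0)) :
    (∫ x, hardyDeriv g x ^ 2) + ∫ x, (a x + p) ^ 2 * g x ^ 2 ≤ lForm a m p g := by
  rw [hg.lForm_eq_integral_hardyDensity,
    ← integral_add hg.integrable_sq_hardyDeriv (hg.integrable_mul_sq hW)]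
  refine integral_mono (hg.integrable_sq_hardyDeriv.fun_add (hg.integrable_mul_sq hW))
    (hg.integrable_hardyDensity hW) fun x => ?_
  simp only [hardyDensity]
  linear_combination (m : ℝ) ^ 2 * sq_nonneg (x⁻¹ * g x)

/- With `F = g² / x`, one has `g(r)² = r F(r) = -∫_r^∞ r F'`, and
`-r F' = -2 (r / x) g · hardyDeriv g` is at most `hardyDeriv g ² / ε + ε g²`. -/
lemma sq_apply_le (hg : IsTestR g) {ε : ℝ} (hε : 0 < ε) (r : ℝ) :
    g r ^ 2 ≤ (∫ x, hardyDeriv g x ^ 2) / ε + ε * ∫ x, g x ^ 2 := by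
  have hD := hg.integrable_sq_hardyDeriv.div_const ε
  have hN := hg.integrable_sq.const_mul ε
  rw [← integral_div, ← integral_const_mul, ← integral_add hD hN]
  have hpos : ∀ x, 0 ≤ hardyDeriv g x ^ 2 / ε + ε * g x ^ 2 := fun x => by positivity
  rcases le_or_gt r 0 with hr | hr
  · rw [hg.eq_zero hr, zero_pow two_ne_zero]
    exact integral_nonneg hpos
  have hAMGM : ∀ x ∈ Ioi r, -r * deriv (fun x => g x * (x⁻¹ * g x)) x ≤
      hardyDeriv g x ^ 2 / ε + ε * g x ^ 2 := fun x hx => by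
    have hx0 : 0 < x := hr.trans hx
    have hrx : r * x⁻¹ ≤ 1 := mul_inv_le_one_of_le₀ (le_of_lt hx) hx0.le
    have hrx2 : (r * x⁻¹) ^ 2 ≤ 1 := pow_le_one₀ (by positivity) hrx
    rw [hg.deriv_mul_inv_mul]
    have hsq : 0 ≤ ε * (g x * (r * x⁻¹) + hardyDeriv g x / ε) ^ 2 := by positivity
    have hexp : ε * (g x * (r * x⁻¹) + hardyDeriv g x / ε) ^ 2 = ε * g x ^ 2 * (r * x⁻¹) ^ 2
        + 2 * r * (x⁻¹ * g x) * hardyDeriv g x + hardyDeriv g x ^ 2 / ε := by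
      field_simp
      ring
    have := mul_le_mul_of_nonneg_left hrx2 (by positivity : 0 ≤ ε * g x ^ 2)
    linarith
  calc g r ^ 2 = ∫ x in Ioi r, -r * deriv (fun x => g x * (x⁻¹ * g x)) x := by
        rw [integral_const_mul,
          hg.2.1.mul_right.integral_Ioi_deriv_eq hg.contDiff_mul_inv_mul]
        field_simp
    _ ≤ ∫ x in Ioi r, (hardyDeriv g x ^ 2 / ε + ε * g x ^ 2) :=
        setIntegral_mono_on (hg.integrable_deriv_mul_inv_mul.const_mul _).integrableOn
          (hD.fun_add hN).integrableOn measurableSet_Ioi hAMGM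
    _ ≤ ∫ x, (hardyDeriv g x ^ 2 / ε + ε * g x ^ 2) :=
        setIntegral_le_integral (hD.fun_add hN) (.of_forall hpos)

lemma setIntegral_sq_le_of_volume_le (hg : IsTestR g) {δ : ℝ} (hδ : 0 < δ) {E : Set ℝ}
    (hE : MeasurableSet E) (hvol : volume E ≤ ENNReal.ofReal δ) :
    ∫ x in E, g x ^ 2 ≤ 2 * δ ^ 2 * (∫ x, hardyDeriv g x ^ 2) + (∫ x, g x ^ 2) / 2 := by
  have hsup := hg.sq_apply_le (ε := 1 / (2 * δ)) (by positivity)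
  set S := (∫ x, hardyDeriv g x ^ 2) / (1 / (2 * δ)) + 1 / (2 * δ) * ∫ x, g x ^ 2 with hS
  have hS0 : 0 ≤ S := (sq_nonneg _).trans (hsup 0)
  calc ∫ x in E, g x ^ 2
      ≤ ∫ _ in E, S := setIntegral_mono_on hg.integrable_sq.integrableOn
        (integrableOn_const (hvol.trans_lt ENNReal.ofReal_lt_top).ne) hE fun x _ => hsup x
    _ = (volume E).toReal * S := setIntegral_const S
    _ ≤ δ * S := by
        gcongr
        exact ENNReal.toReal_le_of_le_ofReal hδ.le hvol
    _ = 2 * δ ^ 2 * (∫ x, hardyDeriv g x ^ 2) + (∫ x, g x ^ 2) / 2 := by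
        rw [hS]
        field_simp

lemma mul_setIntegral_sq_le (hg : IsTestR g)
    (hW : LocallyIntegrableOn (fun r => (a r + p) ^ 2) (Ioi 0)) {M : ℝ} {F : Set ℝ}
    (hF : MeasurableSet F) (hFM : ∀ x ∈ F, g x ≠ 0 → M ≤ (a x + p) ^ 2) :
    M * ∫ x in F, g x ^ 2 ≤ ∫ x, (a x + p) ^ 2 * g x ^ 2 := by
  rw [← integral_const_mul]
  calc ∫ x in F, M * g x ^ 2 ≤ ∫ x in F, (a x + p) ^ 2 * g x ^ 2 := by
        refine setIntegral_mono_on (hg.integrable_sq.const_mul M).integrableOn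
          (hg.integrable_mul_sq hW).integrableOn hF fun x hx => ?_
        by_cases hgx : g x = 0
        · simp [hgx]
        · gcongr
          exact hFM x hx hgx
    _ ≤ ∫ x, (a x + p) ^ 2 * g x ^ 2 :=
        setIntegral_le_integral (hg.integrable_mul_sq hW) (.of_forall fun x => by positivity)

theorem integral_sq_le_mul_lForm (hg : IsTestR g)
    (hW : LocallyIntegrableOn (fun r => (a r + p) ^ 2) (Ioi 0)) {δ M : ℝ} (hδ : 0 < δ)
    (hM : 0 < M) {E : Set ℝ} (hE : MeasurableSet E) (hvol : volume E ≤ ENNReal.ofReal δ)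
    (hEM : ∀ x ∉ E, g x ≠ 0 → M ≤ (a x + p) ^ 2) :
    ∫ x, g x ^ 2 ≤ (4 * δ ^ 2 + 2 / M) * lForm a m p g := by
  have hin := hg.setIntegral_sq_le_of_volume_le hδ hE hvol
  have hout := hg.mul_setIntegral_sq_le hW hE.compl hEM
  rw [mul_comm, ← le_div_iff₀ hM] at hout
  have hsplit := integral_add_compl hE hg.integrable_sq
  have hD : 0 ≤ ∫ x, hardyDeriv g x ^ 2 := integral_nonneg fun x => sq_nonneg _
  have hV : 0 ≤ ∫ x, (a x + p) ^ 2 * g x ^ 2 := integral_nonneg fun x => by positivity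
  calc ∫ x, g x ^ 2
      ≤ 4 * δ ^ 2 * (∫ x, hardyDeriv g x ^ 2) + 2 / M * ∫ x, (a x + p) ^ 2 * g x ^ 2 := by
        linear_combination 2 * hin + 2 * hout - 2 * hsplit
    _ ≤ (4 * δ ^ 2 + 2 / M) * ((∫ x, hardyDeriv g x ^ 2) + ∫ x, (a x + p) ^ 2 * g x ^ 2) := by
        rw [mul_add, add_mul, add_mul]
        have : 0 ≤ 2 / M * ∫ x, hardyDeriv g x ^ 2 := by positivity
        have : 0 ≤ 4 * δ ^ 2 * ∫ x, (a x + p) ^ 2 * g x ^ 2 := by positivity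
        linarith
    _ ≤ (4 * δ ^ 2 + 2 / M) * lForm a m p g := by
        gcongr
        exact hg.integral_hardyDeriv_add_integral_potential_le_lForm hW

end IsTestR

section Comparison

variable {a g : ℝ → ℝ} {m : ℤ} {p b r₀ : ℝ}

lemma integrable_oscillatorDensity (hg : IsTestR g) :
    Integrable fun x => deriv g x ^ 2 + b ^ 2 * (x - r₀) ^ 2 * g x ^ 2 := by
  have hgc := hg.continuous
  have hgd := hg.contDiff_one.continuous_deriv_one
  refine (integrable_sq_of_hasCompactSupport hgd hg.2.1.deriv).fun_add ?_
  simp only [← mul_pow]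
  exact integrable_sq_of_hasCompactSupport (by fun_prop) hg.2.1.mul_left

lemma lForm_eq_oscillatorForm_add (hg : IsTestR g)
    (ha : ∀ x, g x ≠ 0 → a x + p = b * (x - r₀)) :
    lForm a m p g =
      oscillatorForm b r₀ g + ((m : ℝ) ^ 2 - 1 / 4) * ∫ x, (x⁻¹ * g x) ^ 2 := by
  rw [hg.lForm_eq_integral_lDensity, oscillatorForm, ← integral_const_mul,
    ← integral_add (integrable_oscillatorDensity hg) (hg.inv_mul.integrable_sq.const_mul _)]
  refine integral_congr_ae (.of_forall fun x => ?_)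
  have hpot : (a x + p) ^ 2 * g x ^ 2 = b ^ 2 * (x - r₀) ^ 2 * g x ^ 2 := by
    by_cases hgx : g x = 0
    · simp [hgx]
    · rw [ha x hgx, mul_pow]
  simp only [lDensity, hpot]
  ring

lemma oscillatorForm_sub_le_lForm (hg : IsTestR g)
    (ha : ∀ x, g x ≠ 0 → a x + p = b * (x - r₀)) {ρ : ℝ} (hρ : 0 < ρ)
    (hsupp : ∀ x, g x ≠ 0 → ρ ≤ x) :
    oscillatorForm b r₀ g - 1 / (4 * ρ ^ 2) * ∫ x, g x ^ 2 ≤ lForm a m p g := by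
  have hle : ∫ x, (x⁻¹ * g x) ^ 2 ≤ 1 / ρ ^ 2 * ∫ x, g x ^ 2 := by
    rw [← integral_const_mul]
    refine integral_mono hg.inv_mul.integrable_sq (hg.integrable_sq.const_mul _) fun x => ?_
    by_cases hgx : g x = 0
    · simp [hgx]
    · simp only [mul_pow, ← one_div, one_div_pow]
      gcongr
      exact hsupp x hgx
  have hnonneg : 0 ≤ (m : ℝ) ^ 2 * ∫ x, (x⁻¹ * g x) ^ 2 :=
    mul_nonneg (sq_nonneg _) (integral_nonneg fun x => sq_nonneg _)
  rw [lForm_eq_oscillatorForm_add hg ha]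
  linear_combination hle / 4 + hnonneg

lemma lForm_zero_le_oscillatorForm_sub (hg : IsTestR g)
    (ha : ∀ x, g x ≠ 0 → a x + p = b * (x - r₀)) {R : ℝ} (hsupp : ∀ x, g x ≠ 0 → x ≤ R) :
    lForm a 0 p g ≤ oscillatorForm b r₀ g - 1 / (4 * R ^ 2) * ∫ x, g x ^ 2 := by
  have hge : 1 / R ^ 2 * ∫ x, g x ^ 2 ≤ ∫ x, (x⁻¹ * g x) ^ 2 := by
    rw [← integral_const_mul]
    refine integral_mono (hg.integrable_sq.const_mul _) hg.inv_mul.integrable_sq fun x => ?_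
    by_cases hgx : g x = 0
    · simp [hgx]
    · have hx : 0 < x := hg.pos_of_ne_zero hgx
      simp only [mul_pow, ← one_div, one_div_pow]
      gcongr
      exact hsupp x hgx
  rw [lForm_eq_oscillatorForm_add hg ha]
  push_cast
  linear_combination hge / 4

end Comparison

section Localization

variable {a g θ : ℝ → ℝ} {m : ℤ} {p ρ : ℝ}

lemma lDensity_cos_mul_add_lDensity_sin_mul {x : ℝ} (hθ : DifferentiableAt ℝ θ x)
    (hg : DifferentiableAt ℝ g x) :
    lDensity a m p (fun y => Real.cos (θ y) * g y) x
        + lDensity a m p (fun y => Real.sin (θ y) * g y) x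
      = lDensity a m p g x + (deriv θ x * g x) ^ 2 := by
  simp only [lDensity, (hθ.hasDerivAt.cos.fun_mul hg.hasDerivAt).deriv,
    (hθ.hasDerivAt.sin.fun_mul hg.hasDerivAt).deriv]
  linear_combination (deriv g x ^ 2 + (deriv θ x * g x) ^ 2
    + ((m : ℝ) ^ 2 - 1 / 4) * x⁻¹ ^ 2 * g x ^ 2 + (a x + p) ^ 2 * g x ^ 2)
    * Real.sin_sq_add_cos_sq (θ x)

/- The IMS localization formula for the partition of unity `cos² θ + sin² θ = 1`. -/
lemma lForm_cos_mul_add_lForm_sin_mul (hg : IsTestR g)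
    (hW : LocallyIntegrableOn (fun r => (a r + p) ^ 2) (Ioi 0))
    (hθ : ContDiff ℝ (⊤ : ℕ∞) θ) :
    lForm a m p (fun x => Real.cos (θ x) * g x) + lForm a m p (fun x => Real.sin (θ x) * g x)
      = lForm a m p g + ∫ x, (deriv θ x * g x) ^ 2 := by
  have hcos : IsTestR fun x => Real.cos (θ x) * g x := hg.mul_left fun x _ => hθ.cos.contDiffAt
  have hsin : IsTestR fun x => Real.sin (θ x) * g x := hg.mul_left fun x _ => hθ.sin.contDiffAt
  have hθ1 : ContDiff ℝ 1 θ := hθ.of_le (by simp)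
  have herr : Integrable fun x => (deriv θ x * g x) ^ 2 := integrable_sq_of_hasCompactSupport
    (hθ1.continuous_deriv_one.mul hg.continuous) hg.2.1.mul_left
  rw [hcos.lForm_eq_integral_lDensity, hsin.lForm_eq_integral_lDensity,
    hg.lForm_eq_integral_lDensity, ← integral_add (hg.integrable_lDensity hW) herr,
    ← integral_add (hcos.integrable_lDensity hW) (hsin.integrable_lDensity hW)]
  exact integral_congr_ae (.of_forall fun x => lDensity_cos_mul_add_lDensity_sin_mul
    (hθ1.differentiable one_ne_zero x) (hg.hasDerivAt x).differentiableAt)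

lemma integral_cos_mul_sq_add_integral_sin_mul_sq (hg : IsTestR g)
    (hθ : ContDiff ℝ (⊤ : ℕ∞) θ) :
    (∫ x, (Real.cos (θ x) * g x) ^ 2) + ∫ x, (Real.sin (θ x) * g x) ^ 2 = ∫ x, g x ^ 2 := by
  rw [← integral_add (hg.mul_left fun x _ => hθ.cos.contDiffAt).integrable_sq
    (hg.mul_left fun x _ => hθ.sin.contDiffAt).integrable_sq]
  refine integral_congr_ae (.of_forall fun x => ?_)
  linear_combination g x ^ 2 * Real.sin_sq_add_cos_sq (θ x)

/-- A smooth angle increasing from `0` on `|x| ≤ ρ` to `π / 2` on `|x| ≥ 2 ρ`; its cosine and sine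
are the partition of unity that separates a neighbourhood of the origin from infinity. -/
def localizationAngle (ρ x : ℝ) : ℝ :=
  Real.pi / 2 * (1 - cutoff (x / ρ))

lemma contDiff_localizationAngle : ContDiff ℝ (⊤ : ℕ∞) (localizationAngle ρ) := by
  have hcut : ContDiff ℝ (⊤ : ℕ∞) cutoff := cutoff.contDiff
  unfold localizationAngle
  fun_prop

lemma sin_localizationAngle_eq_zero (hρ : 0 < ρ) {x : ℝ} (hx : |x| ≤ ρ) :
    Real.sin (localizationAngle ρ x) = 0 := by
  rw [localizationAngle, cutoff_eq_one, sub_self, mul_zero, Real.sin_zero]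
  rwa [abs_div, abs_of_pos hρ, div_le_one hρ]

lemma cos_localizationAngle_eq_zero (hρ : 0 < ρ) {x : ℝ} (hx : 2 * ρ ≤ |x|) :
    Real.cos (localizationAngle ρ x) = 0 := by
  rw [localizationAngle, cutoff_eq_zero, sub_zero, mul_one, Real.cos_pi_div_two]
  rwa [abs_div, abs_of_pos hρ, le_div_iff₀ hρ]

lemma exists_sq_deriv_localizationAngle_le :
    ∃ C, ∀ ρ x, deriv (localizationAngle ρ) x ^ 2 ≤ C / ρ ^ 2 := by
  obtain ⟨C, -, hC⟩ := exists_sq_deriv_cutoff_le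
  refine ⟨(Real.pi / 2) ^ 2 * C, fun ρ x => ?_⟩
  have hderiv : deriv (localizationAngle ρ) x = -(Real.pi / 2 * (deriv cutoff (x / ρ) / ρ)) := by
    have hcut : HasDerivAt cutoff (deriv cutoff (x / ρ)) (x / ρ) :=
      ((cutoff.contDiff (n := 1)).differentiable one_ne_zero _).hasDerivAt
    have hcomp := hcut.comp x ((hasDerivAt_id x).div_const ρ)
    refine ((hcomp.const_sub 1).const_mul (Real.pi / 2)).deriv.trans ?_
    ring
  rw [hderiv, neg_sq, mul_pow, div_pow (deriv _ _), mul_div_assoc]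
  gcongr
  exact hC _

theorem exists_lForm_cos_mul_add_lForm_sin_mul_le :
    ∃ C, ∀ a m p ρ g, IsTestR g → LocallyIntegrableOn (fun r => (a r + p) ^ 2) (Ioi 0) →
      lForm a m p (fun x => Real.cos (localizationAngle ρ x) * g x)
        + lForm a m p (fun x => Real.sin (localizationAngle ρ x) * g x)
      ≤ lForm a m p g + C / ρ ^ 2 * ∫ x, g x ^ 2 := by
  obtain ⟨C, hC⟩ := exists_sq_deriv_localizationAngle_le
  refine ⟨C, fun a m p ρ g hg hW => ?_⟩
  have hθ : ContDiff ℝ 1 (localizationAngle ρ) := contDiff_localizationAngle.of_le (by simp)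
  rw [lForm_cos_mul_add_lForm_sin_mul hg hW contDiff_localizationAngle, ← integral_const_mul]
  refine add_le_add le_rfl (integral_mono (integrable_sq_of_hasCompactSupport
    (hθ.continuous_deriv_one.mul hg.continuous) hg.2.1.mul_left)
    (hg.integrable_sq.const_mul _) fun x => ?_)
  simp only [mul_pow]
  gcongr
  exact hC ρ x

end Localization

section Coercivity

variable {a : ℝ → ℝ}

lemma exists_measurableSet_forall_notMem_abs_le {α : Type*} [MeasurableSpace α]
    {μ : Measure α} [IsFiniteMeasure μ] {f : α → ℝ} (hf : AEMeasurable f μ) {ε : ENNReal}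
    (hε : 0 < ε) : ∃ K E, MeasurableSet E ∧ μ E ≤ ε ∧ ∀ x ∉ E, |f x| ≤ K := by
  obtain ⟨S, hS, hSε⟩ := isTightMeasureSet_iff_exists_isCompact_measure_compl_le.1
    (isTightMeasureSet_singleton (μ := μ.map f)) ε hε
  obtain ⟨K, hK⟩ := hS.isBounded.exists_norm_le
  refine ⟨K, toMeasurable μ (f ⁻¹' Sᶜ), measurableSet_toMeasurable _ _, ?_, fun x hx => ?_⟩
  · rw [measure_toMeasurable, ← Measure.map_apply_of_aemeasurable hf hS.measurableSet.compl]
    exact hSε _ rfl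
  · exact hK _ (not_not.1 fun hxS => hx (subset_toMeasurable _ _ hxS))

lemma locallyIntegrableOn_add_const_sq
    (ham : AEStronglyMeasurable a (volume.restrict (Ioi 0)))
    (ha : LocallyIntegrableOn (fun r => a r ^ 2) (Ioi 0)) (p : ℝ) :
    LocallyIntegrableOn (fun r => (a r + p) ^ 2) (Ioi 0) := by
  rw [locallyIntegrableOn_iff isOpen_Ioi.isLocallyClosed] at ha ⊢
  intro k hk hkc
  have hbound : IntegrableOn (fun r => 2 * a r ^ 2 + 2 * p ^ 2) k :=
    ((ha k hk hkc).const_mul 2).fun_add (integrableOn_const hkc.measure_ne_top)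
  refine hbound.mono' (((ham.mono_measure (Measure.restrict_mono hk le_rfl)).add_const p).pow 2)
    (.of_forall fun r => ?_)
  rw [Real.norm_of_nonneg (sq_nonneg _), add_comm, ← mul_add]
  linear_combination add_sq_le (a := a r) (b := p)

theorem exists_forall_mul_integral_sq_le_lForm
    (ham : AEStronglyMeasurable a (volume.restrict (Ioi 0)))
    (ha : LocallyIntegrableOn (fun r => a r ^ 2) (Ioi 0)) {T : ℝ} (hT : 0 < T) (R : ℝ) :
    ∃ P, ∀ p, P ≤ |p| → ∀ m g, IsTestR g →
      (∀ x, R < x → g x ≠ 0 → 4 * T ≤ (a x + p) ^ 2) →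
      T * ∫ x, g x ^ 2 ≤ lForm a m p g := by
  have hδ : 0 < √(1 / (8 * T)) := by positivity
  have hmeas : AEMeasurable a (volume.restrict (Ioc 0 R)) :=
    ham.aemeasurable.mono_measure (Measure.restrict_mono Ioc_subset_Ioi_self le_rfl)
  obtain ⟨K, E, hE, hvol, hEK⟩ :=
    exists_measurableSet_forall_notMem_abs_le hmeas (ENNReal.ofReal_pos.2 hδ)
  rw [Measure.restrict_apply hE] at hvol
  refine ⟨K + 2 * √T, fun p hp m g hg hfar => ?_⟩
  have hpot : ∀ x ∉ E ∩ Ioc 0 R, g x ≠ 0 → 4 * T ≤ (a x + p) ^ 2 := fun x hx hgx => by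
    rcases lt_or_ge R x with hxR | hxR
    · exact hfar x hxR hgx
    have hax : |a x| ≤ K := hEK x fun hxE => hx ⟨hxE, hg.pos_of_ne_zero hgx, hxR⟩
    have habs : 2 * √T ≤ |a x + p| := by
      have htri := abs_sub_abs_le_abs_add p (a x)
      rw [add_comm p] at htri
      linarith
    calc 4 * T = (2 * √T) ^ 2 := by rw [mul_pow, Real.sq_sqrt hT.le]; norm_num
      _ ≤ |a x + p| ^ 2 := by gcongr
      _ = (a x + p) ^ 2 := sq_abs _
  have hcoer := hg.integral_sq_le_mul_lForm (m := m) (locallyIntegrableOn_add_const_sq ham ha p)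
    hδ (by positivity) (hE.inter measurableSet_Ioc) hvol hpot
  rw [Real.sq_sqrt (by positivity)] at hcoer
  calc T * ∫ x, g x ^ 2
      ≤ T * ((4 * (1 / (8 * T)) + 2 / (4 * T)) * lForm a m p g) := by gcongr
    _ = lForm a m p g := by
        field_simp
        norm_num

end Coercivity

section MinMax

open Polynomial

variable {a : ℝ → ℝ} {m : ℤ} {p : ℝ}

lemma exists_sum_sq_le_mul_norm_sq {ι F : Type*} [Fintype ι] [NormedAddCommGroup F]
    [NormedSpace ℝ F] {v : ι → F} (hv : LinearIndependent ℝ v) :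
    ∃ K : ℝ, ∀ c : ι → ℝ, ∑ i, c i ^ 2 ≤ K * ‖∑ i, c i • v i‖ ^ 2 := by
  let L : EuclideanSpace ℝ ι →ₗ[ℝ] F :=
    Fintype.linearCombination ℝ v ∘ₗ (WithLp.linearEquiv 2 ℝ (ι → ℝ)).toLinearMap
  have hL : L.ker = ⊥ := by
    rw [LinearMap.ker_eq_bot]
    exact hv.fintypeLinearCombination_injective.comp (WithLp.linearEquiv 2 ℝ (ι → ℝ)).injective
  obtain ⟨K, -, hK⟩ := L.exists_antilipschitzWith hL
  refine ⟨(K : ℝ) ^ 2, fun c => ?_⟩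
  have hnorm : ‖WithLp.toLp 2 c‖ ≤ K * ‖∑ i, c i • v i‖ := hK.le_mul_norm (map_zero L) _
  rw [← mul_pow]
  calc ∑ i, c i ^ 2 = ‖WithLp.toLp 2 c‖ ^ 2 := (EuclideanSpace.real_norm_sq_eq _).symm
    _ ≤ (K * ‖∑ i, c i • v i‖) ^ 2 := by gcongr

/-- The space `C_c^∞((0,∞))` of radial test functions. -/
def testFunctions : Submodule ℝ (ℝ → ℝ) where
  carrier := {g | IsTestR g}
  add_mem' {f g} hf hg := ⟨hf.1.add hg.1, hf.2.1.add hg.2.1,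
    (tsupport_add f g).trans (union_subset hf.2.2 hg.2.2)⟩
  zero_mem' := ⟨contDiff_const, .zero, by simp [tsupport]⟩
  smul_mem' c _ hg := hg.mul_left (w := fun _ => c) fun _ _ => contDiffAt_const

lemma isTestR_of_mem_span {ι : Type*} {f : ι → ℝ → ℝ} (hf : ∀ i, IsTestR (f i)) {g : ℝ → ℝ}
    (hg : g ∈ Submodule.span ℝ (range f)) : IsTestR g :=
  Submodule.span_le (p := testFunctions).2 (range_subset_iff.2 hf) hg

lemma IsTestR.memLp_two {g : ℝ → ℝ} (hg : IsTestR g) : MemLp g 2 :=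
  hg.continuous.memLp_of_hasCompactSupport hg.2.1

/-- The embedding of `C_c^∞((0,∞))` into `L²(ℝ)`. -/
def testFunctionsToLp : testFunctions →ₗ[ℝ] Lp ℝ 2 (volume : Measure ℝ) where
  toFun g := g.2.memLp_two.toLp g
  map_add' _ _ := MemLp.toLp_add _ _
  map_smul' c g := MemLp.toLp_const_smul c g.2.memLp_two

lemma testFunctionsToLp_injective : Function.Injective testFunctionsToLp := fun f g hfg =>
  Subtype.ext <| (f.2.continuous.ae_eq_iff_eq volume g.2.continuous).1 <|
    (MemLp.toLp_eq_toLp_iff f.2.memLp_two g.2.memLp_two).1 hfg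

lemma norm_testFunctionsToLp_sq (g : testFunctions) :
    ‖testFunctionsToLp g‖ ^ 2 = ∫ x, (g : ℝ → ℝ) x ^ 2 := by
  rw [← real_inner_self_eq_norm_sq, L2.inner_def]
  refine integral_congr_ae ?_
  filter_upwards [g.2.memLp_two.coeFn_toLp] with x hx
  simp only [testFunctionsToLp, LinearMap.coe_mk, AddHom.coe_mk, hx, inner_self_eq_norm_sq_to_K]
  simp

lemma exists_sum_sq_le_mul_integral_sq {ι : Type*} [Fintype ι] {f : ι → ℝ → ℝ}
    (hf : ∀ i, IsTestR (f i)) (hl : LinearIndependent ℝ f) :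
    ∃ K : ℝ, ∀ c : ι → ℝ, ∑ i, c i ^ 2 ≤ K * ∫ x, (∑ i, c i • f i) x ^ 2 := by
  let F : ι → testFunctions := fun i => ⟨f i, hf i⟩
  have hF : LinearIndependent ℝ F := LinearIndependent.of_comp testFunctions.subtype hl
  obtain ⟨K, hK⟩ := exists_sum_sq_le_mul_norm_sq
    (hF.map' testFunctionsToLp (LinearMap.ker_eq_bot.2 testFunctionsToLp_injective))
  refine ⟨K, fun c => (hK c).trans_eq ?_⟩
  have hsum : ∑ i, c i • (testFunctionsToLp ∘ F) i = testFunctionsToLp (∑ i, c i • F i) := by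
    simp only [map_sum, map_smul, Function.comp_apply]
  rw [hsum, norm_testFunctionsToLp_sq, Submodule.coe_sum]
  rfl

lemma hardyDeriv_sum_smul {ι : Type*} [Fintype ι] {f : ι → ℝ → ℝ} (hf : ∀ i, IsTestR (f i))
    (c : ι → ℝ) (x : ℝ) : hardyDeriv (∑ i, c i • f i) x = ∑ i, c i * hardyDeriv (f i) x := by
  have hderiv : HasDerivAt (∑ i, c i • f i) (∑ i, c i • deriv (f i) x) x :=
    HasDerivAt.sum fun i _ => ((hf i).hasDerivAt x).const_smul (c i)
  simp only [hardyDeriv, hderiv.deriv, Finset.sum_apply, Pi.smul_apply, smul_eq_mul,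
    Finset.mul_sum, Finset.sum_div, ← Finset.sum_sub_distrib]
  exact Finset.sum_congr rfl fun i _ => by ring

lemma hardyDensity_sum_smul_le {ι : Type*} [Fintype ι] {f : ι → ℝ → ℝ}
    (hf : ∀ i, IsTestR (f i)) (c : ι → ℝ) (x : ℝ) :
    hardyDensity a m p (∑ i, c i • f i) x ≤
      (∑ i, c i ^ 2) * ∑ i, hardyDensity a m p (f i) x := by
  have hcs := Finset.sum_mul_sq_le_sq_mul_sq Finset.univ c
  have hval : (∑ i, c i • f i) x = ∑ i, c i * f i x := by simp
  simp only [hardyDensity, hardyDeriv_sum_smul hf, hval, mul_pow, Finset.sum_add_distrib,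
    ← Finset.mul_sum]
  linear_combination hcs (fun i => hardyDeriv (f i) x)
    + ((m : ℝ) ^ 2 * x⁻¹ ^ 2 + (a x + p) ^ 2) * hcs (fun i => f i x)

lemma lForm_sum_smul_le {ι : Type*} [Fintype ι] {f : ι → ℝ → ℝ} (hf : ∀ i, IsTestR (f i))
    (hW : LocallyIntegrableOn (fun r => (a r + p) ^ 2) (Ioi 0)) (c : ι → ℝ) :
    lForm a m p (∑ i, c i • f i) ≤ (∑ i, c i ^ 2) * ∑ i, lForm a m p (f i) := by
  have hg : IsTestR (∑ i, c i • f i) := isTestR_of_mem_span hf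
    ((Submodule.mem_span_range_iff_exists_fun ℝ).2 ⟨c, rfl⟩)
  have hint : ∀ i ∈ Finset.univ, Integrable (hardyDensity a m p (f i)) :=
    fun i _ => (hf i).integrable_hardyDensity hW
  simp only [hg.lForm_eq_integral_hardyDensity, (hf _).lForm_eq_integral_hardyDensity]
  rw [← integral_finsetSum _ hint, ← integral_const_mul]
  exact integral_mono (hg.integrable_hardyDensity hW)
    ((integrable_finsetSum _ hint).const_mul _) (hardyDensity_sum_smul_le hf c)

lemma exists_forall_mem_span_lForm_le {ι : Type*} [Finite ι] {f : ι → ℝ → ℝ}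
    (hf : ∀ i, IsTestR (f i)) (hl : LinearIndependent ℝ f)
    (hW : LocallyIntegrableOn (fun r => (a r + p) ^ 2) (Ioi 0)) :
    ∃ K, ∀ g ∈ Submodule.span ℝ (range f), lForm a m p g ≤ K * ∫ x, g x ^ 2 := by
  cases nonempty_fintype ι
  obtain ⟨K, hK⟩ := exists_sum_sq_le_mul_integral_sq hf hl
  refine ⟨K * ∑ i, lForm a m p (f i), fun g hg => ?_⟩
  obtain ⟨c, rfl⟩ := (Submodule.mem_span_range_iff_exists_fun ℝ).1 hg
  calc lForm a m p (∑ i, c i • f i)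
      ≤ (∑ i, c i ^ 2) * ∑ i, lForm a m p (f i) := lForm_sum_smul_le hf hW c
    _ ≤ (K * ∫ x, (∑ i, c i • f i) x ^ 2) * ∑ i, lForm a m p (f i) :=
        mul_le_mul_of_nonneg_right (hK c) (Finset.sum_nonneg fun i _ => (hf i).lForm_nonneg)
    _ = K * (∑ i, lForm a m p (f i)) * ∫ x, (∑ i, c i • f i) x ^ 2 := by ring

lemma IsTestR.integral_sq_pos {g : ℝ → ℝ} (hg : IsTestR g) (h0 : g ≠ 0) :
    0 < ∫ x, g x ^ 2 := by
  obtain ⟨x, hx⟩ := Function.ne_iff.1 h0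
  exact (hg.continuous.pow 2).integral_pos_of_hasCompactSupport_nonneg_nonzero
    (hg.2.1.comp_left (zero_pow two_ne_zero)) (fun x => sq_nonneg (g x)) (pow_ne_zero 2 hx)

/-- Multiplication of the polynomial `P(x - r₀)` by the weight `w`, as a linear map in `P`. -/
def weightedPolynomial (w : ℝ → ℝ) (r₀ : ℝ) : ℝ[X] →ₗ[ℝ] (ℝ → ℝ) where
  toFun P x := w x * P.eval (x - r₀)
  map_add' P Q := by
    ext x
    simp [mul_add]
  map_smul' c P := by
    ext x
    simp [mul_left_comm]

lemma weightedPolynomial_injective {w : ℝ → ℝ} {r₀ : ℝ} (hw : {x | w x ≠ 0}.Infinite) :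
    Function.Injective (weightedPolynomial w r₀) := by
  refine (injective_iff_map_eq_zero _).2 fun P hP => eq_zero_of_infinite_isRoot P ?_
  refine (hw.image (f := fun x => x - r₀) sub_left_injective.injOn).mono ?_
  rintro _ ⟨x, hx, rfl⟩
  exact (mul_eq_zero.1 (congrFun hP x)).resolve_left hx

lemma IsTestR.weightedPolynomial {w : ℝ → ℝ} (hw : IsTestR w) (r₀ : ℝ) (P : ℝ[X]) :
    IsTestR (weightedPolynomial w r₀ P) := by
  have hP : ContDiff ℝ (⊤ : ℕ∞) fun x => P.eval (x - r₀) := by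
    have := P.contDiff_aeval (𝕜 := ℝ) (⊤ : ℕ∞)
    simp only [coe_aeval_eq_eval] at this
    fun_prop
  have htest := hw.mul_left fun x _ => hP.contDiffAt
  simp only [mul_comm (P.eval _)] at htest
  exact htest

lemma exists_linearIndependent_span_eq_weightedPolynomial {w : ℝ → ℝ} (r₀ : ℝ)
    (hw : {x | w x ≠ 0}.Infinite) (n : ℕ) :
    ∃ f : Fin n → ℝ → ℝ, LinearIndependent ℝ f ∧
      Submodule.span ℝ (range f) = (degreeLT ℝ n).map (weightedPolynomial w r₀) := by
  let B := (Pi.basisFun ℝ (Fin n)).map (degreeLTEquiv ℝ n).symm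
  let T := weightedPolynomial w r₀ ∘ₗ (degreeLT ℝ n).subtype
  have hT : Function.Injective T :=
    (weightedPolynomial_injective hw).comp (degreeLT ℝ n).injective_subtype
  refine ⟨T ∘ B, B.linearIndependent.map' T (LinearMap.ker_eq_bot.2 hT), ?_⟩
  rw [range_comp, ← Submodule.map_span, B.span_eq, Submodule.map_comp, Submodule.map_top,
    Submodule.range_subtype]

lemma exists_isTestR_forall_mem_Icc_ne_zero {α β : ℝ} (hα : 0 < α) (hαβ : α ≤ β) :
    ∃ w, IsTestR w ∧ ∀ x ∈ Icc α β, w x ≠ 0 := by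
  let w : ContDiffBump ((α + β) / 2) :=
    ⟨(β - α) / 2 + α / 4, (β - α) / 2 + α / 2, by linarith, by linarith⟩
  refine ⟨w, ⟨w.contDiff, w.hasCompactSupport, fun x hx => ?_⟩, fun x hx => ?_⟩
  · rw [w.tsupport_eq, Real.closedBall_eq_Icc] at hx
    have : (α + β) / 2 - ((β - α) / 2 + α / 2) ≤ x := hx.1
    exact mem_Ioi.2 (by linarith)
  · rw [w.one_of_mem_closedBall]
    · exact one_ne_zero
    · rw [Real.closedBall_eq_Icc]
      exact ⟨show (α + β) / 2 - ((β - α) / 2 + α / 4) ≤ x by linarith [hx.1],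
        show x ≤ (α + β) / 2 + ((β - α) / 2 + α / 4) by linarith [hx.2]⟩

lemma exists_linearIndependent_isTestR (n : ℕ) :
    ∃ f : Fin n → ℝ → ℝ, (∀ i, IsTestR (f i)) ∧ LinearIndependent ℝ f := by
  obtain ⟨w, hw, hw0⟩ := exists_isTestR_forall_mem_Icc_ne_zero one_pos one_le_two
  obtain ⟨f, hl, hspan⟩ := exists_linearIndependent_span_eq_weightedPolynomial 0
    ((Icc_infinite one_lt_two).mono hw0) n
  refine ⟨f, fun i => ?_, hl⟩
  obtain ⟨P, -, hP⟩ := hspan.le (Submodule.subset_span (mem_range_self i))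
  exact hP ▸ hw.weightedPolynomial 0 P

lemma muRadial_le {n : ℕ} (hn : n ≠ 0) {s : ℝ} {f : Fin n → ℝ → ℝ} (hf : ∀ i, IsTestR (f i))
    (hl : LinearIndependent ℝ f)
    (hs : ∀ g ∈ Submodule.span ℝ (range f), g ≠ 0 → lForm a m p g ≤ s * ∫ x, g x ^ 2) :
    muRadial a m n p ≤ s := by
  refine csInf_le_of_le ⟨0, ?_⟩ ⟨f, hf, hl, rfl⟩ (csSup_le ?_ ?_)
  · rintro _ ⟨f, hf, -, rfl⟩
    refine Real.sSup_nonneg ?_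
    rintro _ ⟨g, hg, -, rfl⟩
    exact div_nonneg (isTestR_of_mem_span hf hg).lForm_nonneg
      (integral_nonneg fun x => sq_nonneg _)
  · have i : Fin n := ⟨0, Nat.pos_of_ne_zero hn⟩
    exact ⟨_, f i, Submodule.subset_span (mem_range_self i), hl.ne_zero i, rfl⟩
  · rintro _ ⟨g, hg, h0, rfl⟩
    have hgt := isTestR_of_mem_span hf hg
    rw [hgt.setIntegral_sq, div_le_iff₀ (hgt.integral_sq_pos h0)]
    exact hs g hg h0

lemma le_muRadial {n : ℕ} {s : ℝ} (hW : LocallyIntegrableOn (fun r => (a r + p) ^ 2) (Ioi 0))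
    (hs : ∀ f : Fin n → ℝ → ℝ, (∀ i, IsTestR (f i)) → LinearIndependent ℝ f →
      ∃ g ∈ Submodule.span ℝ (range f), g ≠ 0 ∧ s * (∫ x, g x ^ 2) ≤ lForm a m p g) :
    s ≤ muRadial a m n p := by
  obtain ⟨f₀, hf₀, hl₀⟩ := exists_linearIndependent_isTestR n
  refine le_csInf ⟨_, f₀, hf₀, hl₀, rfl⟩ ?_
  rintro _ ⟨f, hf, hl, rfl⟩
  obtain ⟨g, hg, h0, hle⟩ := hs f hf hl
  obtain ⟨K, hK⟩ := exists_forall_mem_span_lForm_le (m := m) hf hl hW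
  have hgt := isTestR_of_mem_span hf hg
  refine le_csSup_of_le ⟨K, ?_⟩ ⟨g, hg, h0, rfl⟩ ?_
  · rintro _ ⟨k, hk, hk0, rfl⟩
    have hkt := isTestR_of_mem_span hf hk
    rw [hkt.setIntegral_sq, div_le_iff₀ (hkt.integral_sq_pos hk0)]
    exact hK k hk
  · rwa [hgt.setIntegral_sq, le_div_iff₀ (hgt.integral_sq_pos h0)]

lemma le_muRadial_of_forall_isTestR {n : ℕ} (hn : n ≠ 0) {s : ℝ}
    (hW : LocallyIntegrableOn (fun r => (a r + p) ^ 2) (Ioi 0))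
    (hs : ∀ g, IsTestR g → s * (∫ x, g x ^ 2) ≤ lForm a m p g) : s ≤ muRadial a m n p :=
  le_muRadial hW fun f hf hl =>
    have i : Fin n := ⟨0, Nat.pos_of_ne_zero hn⟩
    ⟨f i, Submodule.subset_span (mem_range_self i), hl.ne_zero i, hs _ (hf i)⟩

lemma muRadial_le_of_forall_weightedPolynomial {n : ℕ} (hn : n ≠ 0) {s r₀ : ℝ} {w : ℝ → ℝ}
    (hw : IsTestR w) (hw0 : {x | w x ≠ 0}.Infinite)
    (hs : ∀ P ∈ degreeLT ℝ n, P ≠ 0 → lForm a m p (weightedPolynomial w r₀ P)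
      ≤ s * ∫ x, weightedPolynomial w r₀ P x ^ 2) :
    muRadial a m n p ≤ s := by
  obtain ⟨f, hl, hspan⟩ := exists_linearIndependent_span_eq_weightedPolynomial r₀ hw0 n
  refine muRadial_le hn (fun i => ?_) hl fun g hg h0 => ?_
  · obtain ⟨P, -, hP⟩ := hspan.le (Submodule.subset_span (mem_range_self i))
    exact hP ▸ hw.weightedPolynomial r₀ P
  · obtain ⟨P, hP, rfl⟩ := hspan.le hg
    exact hs P hP fun hP0 => h0 (by rw [hP0, map_zero])

lemma exists_mem_span_forall_integral_mul_eq_zero {d : ℕ} {f : Fin (d + 1) → ℝ → ℝ}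
    (hf : ∀ i, IsTestR (f i)) (hl : LinearIndependent ℝ f) {ψ : Fin d → ℝ → ℝ}
    (hψ : ∀ j, Continuous (ψ j)) :
    ∃ g ∈ Submodule.span ℝ (range f), g ≠ 0 ∧ ∀ j, ∫ x, g x * ψ j x = 0 := by
  let M : Matrix (Fin d) (Fin (d + 1)) ℝ := .of fun j i => ∫ x, f i x * ψ j x
  have hker : M.mulVecLin.ker ≠ ⊥ := LinearMap.ker_ne_bot_of_finrank_lt (by simp)
  obtain ⟨c, hc, hc0⟩ := Submodule.exists_mem_ne_zero_of_ne_bot hker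
  refine ⟨∑ i, c i • f i, (Submodule.mem_span_range_iff_exists_fun ℝ).2 ⟨c, rfl⟩,
    fun h0 => hc0 (funext (Fintype.linearIndependent_iff.1 hl c h0)), fun j => ?_⟩
  have hint : ∀ i ∈ Finset.univ, Integrable fun x => f i x * ψ j x * c i := fun i _ =>
    (((hf i).continuous.mul (hψ j)).integrable_of_hasCompactSupport
      (hf i).2.1.mul_right).mul_const (c i)
  calc ∫ x, (∑ i, c i • f i) x * ψ j x = ∫ x, ∑ i, f i x * ψ j x * c i := by
        simp only [Finset.sum_apply, Pi.smul_apply, smul_eq_mul, Finset.sum_mul]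
        congr! 3
        ring
    _ = M.mulVecLin c j := by
        rw [integral_finsetSum _ hint]
        simp only [integral_mul_const]
        rfl
    _ = 0 := congrFun hc j

end MinMax

section Asymptotics

open Polynomial

variable {a : ℝ → ℝ} {m : ℤ} {n : ℕ} {b c : ℝ}

theorem tendsto_muRadial_atTop (ham : AEStronglyMeasurable a (volume.restrict (Ioi 0)))
    (ha : LocallyIntegrableOn (fun r => a r ^ 2) (Ioi 0)) {C : ℝ} (hC : ∀ᶠ r in atTop, C ≤ a r)
    (hn : n ≠ 0) : Tendsto (muRadial a m n) atTop atTop := by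
  refine tendsto_atTop.2 fun T => ?_
  have hT : 0 < max T 1 := lt_max_of_lt_right one_pos
  obtain ⟨R, hR⟩ := eventually_atTop.1 hC
  obtain ⟨P, hP⟩ := exists_forall_mul_integral_sq_le_lForm ham ha hT R
  filter_upwards [eventually_ge_atTop P, eventually_ge_atTop (2 * √(max T 1) - C)]
    with p hpP hpC
  refine (le_max_left T 1).trans <| le_muRadial_of_forall_isTestR hn
    (locallyIntegrableOn_add_const_sq ham ha p) fun g hg =>
      hP p (hpP.trans (le_abs_self p)) m g hg fun x hx _ => ?_
  calc 4 * max T 1 = (2 * √(max T 1)) ^ 2 := by rw [mul_pow, Real.sq_sqrt hT.le]; norm_num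
    _ ≤ (a x + p) ^ 2 := by
        have := hR x hx.le
        gcongr
        linarith

lemma mul_integral_sin_mul_sq_le_lForm {p ρ r₀ : ℝ} {g : ℝ → ℝ} (hg : IsTestR g) (hb : 0 < b)
    (hρ : 0 < ρ) (ha : ∀ x, ρ ≤ x → a x + p = b * (x - r₀)) {d : ℕ}
    (horth : ∀ j < d,
      ∫ x, g x * (Real.sin (localizationAngle ρ x) * gaussianMonomial b r₀ j x) = 0) :
    ((2 * d + 1) * b - 1 / (4 * ρ ^ 2))
        * ∫ x, (Real.sin (localizationAngle ρ x) * g x) ^ 2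
      ≤ lForm a m p fun x => Real.sin (localizationAngle ρ x) * g x := by
  have htest : IsTestR fun x => Real.sin (localizationAngle ρ x) * g x :=
    hg.mul_left fun x _ => (Real.contDiff_sin.comp contDiff_localizationAngle).contDiffAt
  have hsupp : ∀ x, Real.sin (localizationAngle ρ x) * g x ≠ 0 → ρ ≤ x := fun x hx => by
    by_contra! hlt
    have hpos : 0 < x := hg.pos_of_ne_zero (right_ne_zero_of_mul hx)
    exact left_ne_zero_of_mul hx
      (sin_localizationAngle_eq_zero hρ (by rw [abs_of_pos hpos]; exact hlt.le))
  have hosc := mul_integral_sq_le_oscillatorForm hb d htest.contDiff_one htest.2.1 fun j hj => by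
    rw [← horth j hj]
    congr! 2
    ring
  have hcomp := oscillatorForm_sub_le_lForm (m := m) htest (fun x hx => ha x (hsupp x hx)) hρ hsupp
  linarith

lemma exists_sub_mul_integral_sq_le_lForm :
    ∃ C, ∀ a m p ρ E g, IsTestR g → LocallyIntegrableOn (fun r => (a r + p) ^ 2) (Ioi 0) →
      E * ∫ x, (Real.cos (localizationAngle ρ x) * g x) ^ 2
        ≤ lForm a m p (fun x => Real.cos (localizationAngle ρ x) * g x) →
      (E - 1 / (4 * ρ ^ 2)) * ∫ x, (Real.sin (localizationAngle ρ x) * g x) ^ 2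
        ≤ lForm a m p (fun x => Real.sin (localizationAngle ρ x) * g x) →
      (E - C / ρ ^ 2) * ∫ x, g x ^ 2 ≤ lForm a m p g := by
  obtain ⟨C, hC⟩ := exists_lForm_cos_mul_add_lForm_sin_mul_le
  refine ⟨C + 1 / 4, fun a m p ρ E g hg hW hcos hsin => ?_⟩
  have hims := hC a m p ρ g hg hW
  have hnorm := integral_cos_mul_sq_add_integral_sin_mul_sq hg
    (contDiff_localizationAngle (ρ := ρ))
  have hnonneg : 0 ≤ 1 / (4 * ρ ^ 2) * ∫ x, (Real.cos (localizationAngle ρ x) * g x) ^ 2 :=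
    mul_nonneg (by positivity) (integral_nonneg fun x => sq_nonneg _)
  linear_combination hcos + hsin + hims + hnonneg - (E - 1 / (4 * ρ ^ 2)) * hnorm

-- The span of `d + 1` test functions contains a `g` for which `sin θ * g` is orthogonal to the
-- first `d` oscillator states, while `cos θ * g` lives near the origin, where `|a + p|` is large.
theorem eventually_atBot_sub_le_muRadial
    (ham : AEStronglyMeasurable a (volume.restrict (Ioi 0)))
    (ha : LocallyIntegrableOn (fun r => a r ^ 2) (Ioi 0)) (hb : 0 < b)
    (hlin : ∀ᶠ r in atTop, a r = b * r + c) {η : ℝ} (hη : 0 < η) (d : ℕ) :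
    ∀ᶠ p in atBot, (2 * d + 1) * b - η ≤ muRadial a m (d + 1) p := by
  obtain ⟨C, hC⟩ := exists_sub_mul_integral_sq_le_lForm
  have hsmall : ∀ᶠ ρ : ℝ in atTop, C / ρ ^ 2 ≤ η :=
    (tendsto_const_nhds.div_atTop (tendsto_pow_atTop two_ne_zero)).eventually_le_const hη
  obtain ⟨ρ, hρη, hρ, hlinρ⟩ :=
    (hsmall.and ((eventually_gt_atTop 0).and (eventually_forall_ge_atTop.2 hlin))).exists
  obtain ⟨P, hP⟩ := exists_forall_mul_integral_sq_le_lForm ham ha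
    (T := (2 * d + 1) * b) (by positivity) (2 * ρ)
  filter_upwards [tendsto_abs_atBot_atTop.eventually_ge_atTop P] with p hp
  have hW := locallyIntegrableOn_add_const_sq ham ha p
  have hpot : ∀ x, ρ ≤ x → a x + p = b * (x - -(c + p) / b) := fun x hx => by
    rw [hlinρ x hx]
    field_simp
    ring
  refine le_muRadial hW fun f hf hl => ?_
  have hψ : ∀ j : Fin d, Continuous fun x =>
      Real.sin (localizationAngle ρ x) * gaussianMonomial b (-(c + p) / b) j x := fun j =>
    (Real.continuous_sin.comp contDiff_localizationAngle.continuous).mul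
      (contDiff_gaussianMonomial j).continuous
  obtain ⟨g, hg, h0, horth⟩ := exists_mem_span_forall_integral_mul_eq_zero hf hl hψ
  have hgt := isTestR_of_mem_span hf hg
  refine ⟨g, hg, h0, le_trans (by gcongr) (hC a m p ρ ((2 * d + 1) * b) g hgt hW ?_ ?_)⟩
  · exact hP p hp m _
      (hgt.mul_left fun x _ => (Real.contDiff_cos.comp contDiff_localizationAngle).contDiffAt)
      fun x hx hne => absurd (cos_localizationAngle_eq_zero hρ (hx.le.trans (le_abs_self x)))
        (left_ne_zero_of_mul hne)
  · exact mul_integral_sin_mul_sq_le_lForm hgt hb hρ hpot fun j hj => horth ⟨j, hj⟩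

lemma isTestR_cutoffGaussian {r₀ R : ℝ} (hR : 0 < R) (hr₀ : 2 * R < r₀) :
    IsTestR (cutoffGaussian b r₀ R) := by
  have hsupp : tsupport (cutoffGaussian b r₀ R) ⊆ Icc (r₀ - 2 * R) (r₀ + 2 * R) := by
    refine closure_minimal (fun x hx => ?_) isClosed_Icc
    have hlt : |x - r₀| < 2 * R := not_le.1 fun hle => hx (cutoffGaussian_eq_zero hR hle)
    rw [abs_lt] at hlt
    constructor <;> linarith
  exact ⟨contDiff_cutoffGaussian, isCompact_Icc.of_isClosed_subset (isClosed_tsupport _) hsupp,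
    fun x hx => (sub_pos.2 hr₀).trans_le (hsupp hx).1⟩

lemma lForm_trialFunction_le {p R C E : ℝ} (hR : 0 < R)
    (ha : ∀ x, 2 * R ≤ x → a x + p = b * (x - 4 * R)) {P : ℝ[X]}
    (hP : oscillatorForm b (4 * R) (trialFunction b (4 * R) R P)
      ≤ (E + C / R ^ 4) * ∫ x, trialFunction b (4 * R) R P x ^ 2) :
    lForm a 0 p (trialFunction b (4 * R) R P) ≤
      (E + C / R ^ 4 - 1 / (4 * (6 * R) ^ 2)) * ∫ x, trialFunction b (4 * R) R P x ^ 2 := by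
  have htest : IsTestR (trialFunction b (4 * R) R P) :=
    (isTestR_cutoffGaussian hR (by linarith)).weightedPolynomial (4 * R) P
  have hsupp : ∀ x, trialFunction b (4 * R) R P x ≠ 0 → |x - 4 * R| < 2 * R := fun x hx =>
    not_le.1 fun hle => left_ne_zero_of_mul hx (cutoffGaussian_eq_zero hR hle)
  have hHardy := lForm_zero_le_oscillatorForm_sub (p := p) htest
    (fun x hx => ha x (by linarith [(abs_lt.1 (hsupp x hx)).1]))
    (R := 6 * R) fun x hx => by linarith [(abs_lt.1 (hsupp x hx)).2]
  linarith

theorem eventually_atBot_muRadial_lt (hb : 0 < b) (hlin : ∀ᶠ r in atTop, a r = b * r + c)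
    (d : ℕ) : ∀ᶠ p in atBot, muRadial a 0 (d + 1) p < (2 * d + 1) * b := by
  obtain ⟨C, hC⟩ := exists_eventually_oscillatorForm_trialFunction_le hb d
  have hgain : ∀ᶠ R : ℝ in atTop, 144 * C < R ^ 2 :=
    (tendsto_pow_atTop two_ne_zero).eventually_gt_atTop _
  obtain ⟨r₁, hr₁⟩ := eventually_atTop.1 hlin
  have hscale : Tendsto (fun p => -(p + c) / (4 * b)) atBot atTop :=
    (tendsto_neg_atBot_atTop.comp (tendsto_atBot_add_const_right _ c tendsto_id)).atTop_div_const
      (by positivity)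
  filter_upwards [hscale.eventually (hC.and (hgain.and
    ((eventually_gt_atTop 0).and (eventually_ge_atTop r₁))))] with p ⟨hosc, hgainR, hR, hRr₁⟩
  set R := -(p + c) / (4 * b) with hRdef
  have hpot : ∀ x, 2 * R ≤ x → a x + p = b * (x - 4 * R) := fun x hx => by
    rw [hr₁ x (by linarith), hRdef]
    field_simp
    ring
  have hw0 : {x | cutoffGaussian b (4 * R) R x ≠ 0}.Infinite :=
    (Icc_infinite (show 4 * R - R < 4 * R + R by linarith)).mono fun x hx =>
      cutoffGaussian_ne_zero hR (abs_le.2 ⟨by linarith [hx.1], by linarith [hx.2]⟩)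
  have hle : muRadial a 0 (d + 1) p ≤ (2 * d + 1) * b + C / R ^ 4 - 1 / (4 * (6 * R) ^ 2) := by
    refine muRadial_le_of_forall_weightedPolynomial d.succ_ne_zero
      (isTestR_cutoffGaussian hR (by linarith)) hw0 (r₀ := 4 * R) fun P hP _ => ?_
    exact lForm_trialFunction_le hR hpot
      (hosc _ P (natDegree_le_of_degree_le (Order.lt_succ_iff.1 (mem_degreeLT.1 hP))))
  -- The gain from the Hardy term beats the cutoff error.
  have herr : C / R ^ 4 < 1 / (4 * (6 * R) ^ 2) := by
    rw [div_lt_div_iff₀ (by positivity) (by positivity)]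
    nlinarith [pow_pos hR 2]
  linarith

end Asymptotics

section NonMeasurable

open Polynomial

variable {a : ℝ → ℝ} {m : ℤ} {n : ℕ} {p : ℝ}

lemma exists_not_aestronglyMeasurable_restrict_Icc
    (ham : ¬ AEStronglyMeasurable a (volume.restrict (Ioi 0))) :
    ∃ α β, 0 < α ∧ α < β ∧ ¬ AEStronglyMeasurable a (volume.restrict (Icc α β)) := by
  by_contra! hIcc
  have hcover : Ioi (0 : ℝ) ⊆ ⋃ k : ℕ, Icc (1 / ((k : ℝ) + 1)) (k + 2) := fun x hx => by
    obtain ⟨i, hi⟩ := exists_nat_one_div_lt (mem_Ioi.1 hx)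
    obtain ⟨j, hj⟩ := exists_nat_ge x
    refine mem_iUnion.2 ⟨max i j, (Nat.one_div_le_one_div (le_max_left i j)).trans hi.le, ?_⟩
    have : (j : ℝ) ≤ (max i j : ℕ) := by exact_mod_cast le_max_right i j
    linarith
  refine ham (AEStronglyMeasurable.mono_measure (aestronglyMeasurable_iUnion_iff.2 fun k => ?_)
    (Measure.restrict_mono hcover le_rfl))
  have hle : 1 / ((k : ℝ) + 1) ≤ 1 := by
    rw [div_le_one₀ (by positivity)]
    linarith [k.cast_nonneg (α := ℝ)]
  exact hIcc _ _ (by positivity) (by linarith [k.cast_nonneg (α := ℝ)])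

lemma aestronglyMeasurable_of_add_const_sq {α : Type*} [MeasurableSpace α] {μ : Measure α}
    {f : α → ℝ} (hp : p ≠ 0) (hf : AEStronglyMeasurable (fun x => f x ^ 2) μ)
    (hfp : AEStronglyMeasurable (fun x => (f x + p) ^ 2) μ) : AEStronglyMeasurable f μ := by
  have hpolar : f = fun x => (2 * p)⁻¹ * ((f x + p) ^ 2 - f x ^ 2 - p ^ 2) := by
    ext x
    field_simp
    ring
  rw [hpolar]
  exact ((hfp.sub hf).sub aestronglyMeasurable_const).const_mul (2 * p)⁻¹

lemma IsTestR.lForm_eq_zero_of_not_aestronglyMeasurable {g : ℝ → ℝ} (hg : IsTestR g)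
    (ha : LocallyIntegrableOn (fun r => a r ^ 2) (Ioi 0)) (hp : p ≠ 0) {s : Set ℝ}
    (hs : s ⊆ Ioi 0) (hgs : ∀ᵐ x ∂volume.restrict s, g x ≠ 0)
    (has : ¬ AEStronglyMeasurable a (volume.restrict s)) : lForm a m p g = 0 := by
  rw [hg.lForm_eq_integral_hardyDensity]
  refine integral_undef fun hint => has ?_
  have hpot : AEStronglyMeasurable (fun x => (a x + p) ^ 2 * g x ^ 2) := by
    refine (hint.sub (hg.integrable_sq_hardyDeriv.add
      (hg.inv_mul.integrable_sq.const_mul ((m : ℝ) ^ 2)))).1.congr (.of_forall fun x => ?_)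
    simp only [Pi.sub_apply, Pi.add_apply, hardyDensity]
    ring
  refine aestronglyMeasurable_of_add_const_sq hp
    (ha.aestronglyMeasurable.mono_measure (Measure.restrict_mono hs le_rfl)) ?_
  refine (hpot.restrict.div₀ (hg.continuous.pow 2).aestronglyMeasurable).congr ?_
  filter_upwards [hgs] with x hx
  simp [hx]

theorem muRadial_nonpos_of_not_aestronglyMeasurable
    (ha : LocallyIntegrableOn (fun r => a r ^ 2) (Ioi 0))
    (ham : ¬ AEStronglyMeasurable a (volume.restrict (Ioi 0))) (hn : n ≠ 0) (hp : p ≠ 0) :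
    muRadial a m n p ≤ 0 := by
  obtain ⟨α, β, hα, hαβ, hmeas⟩ := exists_not_aestronglyMeasurable_restrict_Icc ham
  obtain ⟨w, hw, hw0⟩ := exists_isTestR_forall_mem_Icc_ne_zero hα hαβ.le
  refine muRadial_le_of_forall_weightedPolynomial (r₀ := 0) hn hw
    ((Icc_infinite hαβ).mono hw0) fun P _ hP => ?_
  rw [zero_mul]
  refine ((hw.weightedPolynomial 0 P).lForm_eq_zero_of_not_aestronglyMeasurable ha hp
    (fun x hx => hα.trans_le hx.1) ?_ hmeas).le
  have hroots : ∀ᵐ x : ℝ, ¬ P.IsRoot x :=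
    measure_eq_zero_iff_ae_notMem.1 ((finite_setOfPred_isRoot hP).measure_zero volume)
  filter_upwards [ae_restrict_mem measurableSet_Icc, ae_restrict_of_ae hroots] with x hx hPx
  exact mul_ne_zero (hw0 x hx) (by rwa [sub_zero])

theorem muRadial_zero_pos (ha : LocallyIntegrableOn (fun r => a r ^ 2) (Ioi 0)) {ε : ℝ}
    (hε : 0 < ε) (haε : ∀ᶠ r in atTop, ε ≤ a r) (hn : n ≠ 0) : 0 < muRadial a m n 0 := by
  obtain ⟨R, haR, hR⟩ :=
    ((eventually_forall_ge_atTop.2 haε).and (eventually_gt_atTop 0)).exists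
  have hW : LocallyIntegrableOn (fun r => (a r + 0) ^ 2) (Ioi 0) := by simpa only [add_zero]
  have hC : 0 < 4 * R ^ 2 + 2 / ε ^ 2 := by positivity
  refine (inv_pos.2 hC).trans_le (le_muRadial_of_forall_isTestR hn hW fun g hg => ?_)
  rw [inv_mul_le_iff₀ hC]
  refine hg.integral_sq_le_mul_lForm hW hR (by positivity) measurableSet_Ioo
    (E := Ioo 0 R) (by simp) fun x hx hgx => ?_
  have hRx : R ≤ x := not_lt.1 fun hlt => hx ⟨hg.pos_of_ne_zero hgx, hlt⟩
  rw [add_zero]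
  gcongr
  exact haR x hRx

end NonMeasurable

section NotMonotone

variable {a : ℝ → ℝ} {b c : ℝ} {n : ℕ}

lemma exists_eventually_eq_linear_of_hasDerivAt (h : ∀ᶠ r in atTop, HasDerivAt a b r) :
    ∃ c, ∀ᶠ r in atTop, a r = b * r + c := by
  obtain ⟨r₁, hr₁⟩ := eventually_atTop.1 h
  have hderiv : ∀ r, r₁ ≤ r → HasDerivAt (fun r => a r - b * r) 0 r := fun r hr => by
    simpa using (hr₁ r hr).fun_sub ((hasDerivAt_id r).const_mul b)
  refine ⟨a r₁ - b * r₁, eventually_atTop.2 ⟨r₁, fun r hr => ?_⟩⟩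
  have hconst := constant_of_has_deriv_right_zero
    (fun x hx => (hderiv x hx.1).continuousAt.continuousWithinAt)
    (fun x hx => (hderiv x hx.1).hasDerivWithinAt) r ⟨hr, le_rfl⟩
  linarith

lemma locallyIntegrableOn_sq_Ioi_zero
    (ha : ∀ R > (0 : ℝ), IntegrableOn (fun r => a r ^ 2 * r) (Ioc 0 R)) :
    LocallyIntegrableOn (fun r => a r ^ 2) (Ioi 0) := by
  have hmul : LocallyIntegrableOn (fun r => a r ^ 2 * r) (Ioi 0) := fun x hx =>
    ⟨Ioc 0 (x + 1), mem_nhdsWithin_of_mem_nhds (Ioc_mem_nhds hx (lt_add_one x)),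
      ha _ (hx.trans (lt_add_one x))⟩
  have hinv : ContinuousOn (fun r : ℝ => r⁻¹) (Ioi 0) :=
    continuousOn_inv₀.mono fun r hr => ne_of_gt hr
  have hsq := hmul.continuousOn_mul hinv isOpen_Ioi.isLocallyClosed
  rw [locallyIntegrableOn_iff isOpen_Ioi.isLocallyClosed] at hsq ⊢
  refine fun k hk hkc => (hsq k hk hkc).congr_fun (fun r hr => ?_) hkc.measurableSet
  have : r ≠ 0 := ne_of_gt (hk hr)
  field_simp

theorem exists_nonpos_muRadial_lt (ham : AEStronglyMeasurable a (volume.restrict (Ioi 0)))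
    (ha : LocallyIntegrableOn (fun r => a r ^ 2) (Ioi 0)) (hb : 0 < b)
    (hlin : ∀ᶠ r in atTop, a r = b * r + c) (hn : n ≠ 0) :
    ∃ p₁ p₂, p₁ < p₂ ∧ p₂ ≤ 0 ∧ muRadial a 0 n p₂ < muRadial a 0 n p₁ := by
  obtain ⟨d, rfl⟩ := Nat.exists_eq_succ_of_ne_zero hn
  obtain ⟨p₂, hlt, hp₂⟩ :=
    ((eventually_atBot_muRadial_lt hb hlin d).and (eventually_le_atBot 0)).exists
  obtain ⟨p₁, hle, hp₁⟩ := ((eventually_atBot_sub_le_muRadial (m := 0) ham ha hb hlin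
    (half_pos (sub_pos.2 hlt)) d).and (eventually_lt_atBot p₂)).exists
  exact ⟨p₁, p₂, hp₁, hp₂, by simp only [Nat.succ_eq_add_one]; linarith⟩

theorem muRadial_not_monotone_general (ha : LocallyIntegrableOn (fun r => a r ^ 2) (Ioi 0))
    (hb : 0 < b) (hab : ∀ᶠ r in atTop, HasDerivAt a b r) (hn : n ≠ 0) :
    ((∃ p₁ p₂, p₁ < p₂ ∧ muRadial a 0 n p₂ < muRadial a 0 n p₁) ∧
      (∃ p₃ p₄, p₃ < p₄ ∧ muRadial a 0 n p₃ < muRadial a 0 n p₄)) ∧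
    (AEStronglyMeasurable a (volume.restrict (Ioi 0)) →
      ∃ p₁ p₂, p₁ < p₂ ∧ p₂ ≤ 0 ∧ muRadial a 0 n p₂ < muRadial a 0 n p₁) := by
  obtain ⟨c, hlin⟩ := exists_eventually_eq_linear_of_hasDerivAt hab
  have hone : ∀ᶠ r in atTop, 1 ≤ a r := by
    have htop := tendsto_atTop_add_const_right atTop c (tendsto_id.const_mul_atTop hb)
    filter_upwards [hlin, htop.eventually_ge_atTop 1] with r hr hle
    exact hle.trans_eq hr.symm
  by_cases ham : AEStronglyMeasurable a (volume.restrict (Ioi 0))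
  · obtain ⟨p₁, p₂, hp, hp₂, hlt⟩ := exists_nonpos_muRadial_lt ham ha hb hlin hn
    obtain ⟨p₄, hlt₄, hp₄⟩ := (((tendsto_muRadial_atTop (m := 0) ham ha hone hn).eventually_gt_atTop
      (muRadial a 0 n 0)).and (eventually_gt_atTop 0)).exists
    exact ⟨⟨⟨p₁, p₂, hp, hlt⟩, ⟨0, p₄, hp₄, hlt₄⟩⟩, fun _ => ⟨p₁, p₂, hp, hp₂, hlt⟩⟩
  · have hpos : 0 < muRadial a 0 n 0 := muRadial_zero_pos ha one_pos hone hn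
    have hnonpos : ∀ p ≠ 0, muRadial a 0 n p ≤ 0 := fun p hp =>
      muRadial_nonpos_of_not_aestronglyMeasurable ha ham hn hp
    exact ⟨⟨⟨0, 1, one_pos, (hnonpos 1 one_ne_zero).trans_lt hpos⟩,
      ⟨-1, 0, neg_one_lt_zero, (hnonpos (-1) (by norm_num)).trans_lt hpos⟩⟩,
      fun h => absurd h ham⟩

end NotMonotone

/-- Theorem 4.10 of the paper: for a field which is constant (`a'(r) = b₀ > 0`) for large `r`,
each function `p ↦ μ_{n,0}(p)` is not monotone on `ℝ`; moreover, for the linear potential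
`a(r) = b₀ r` the monotonicity is lost already for `p ≤ 0`. -/
theorem muRadial_not_monotone (b₀ : ℝ) (hb₀ : 0 < b₀) (a : ℝ → ℝ)
    (ha : ∀ R > (0:ℝ), IntegrableOn (fun r => (a r) ^ 2 * r) (Set.Ioc 0 R))
    (habd : ∀ R > (0:ℝ), ∃ C : ℝ, ∀ r ∈ Set.Icc (0:ℝ) R, a r ≤ C)
    (hab : ∃ r₁ > (0:ℝ), ∀ r ≥ r₁, HasDerivAt a b₀ r) :
    ∀ n : ℕ, 1 ≤ n →
      ((∃ p₁ p₂ : ℝ, p₁ < p₂ ∧ muRadial a 0 n p₂ < muRadial a 0 n p₁) ∧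
       (∃ p₃ p₄ : ℝ, p₃ < p₄ ∧ muRadial a 0 n p₃ < muRadial a 0 n p₄)) ∧
      ((∀ r ≥ (0:ℝ), a r = b₀ * r) →
        ∃ p₁ p₂ : ℝ, p₁ < p₂ ∧ p₂ ≤ 0 ∧ muRadial a 0 n p₂ < muRadial a 0 n p₁) := by
  refine fun n hn => (muRadial_not_monotone_general (locallyIntegrableOn_sq_Ioi_zero ha) hb₀
    (eventually_atTop.2 (hab.imp fun _ h => h.2)) (Nat.one_le_iff_ne_zero.1 hn)).imp_right
      fun hmeas hlinear => hmeas ?_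
  exact (continuous_const_mul b₀).aestronglyMeasurable.congr <|
    (ae_restrict_mem measurableSet_Ioi).mono fun r hr => (hlinear r (le_of_lt hr)).symm
end
end
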